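/- arXiv:1402.3350 — 12 statements merged into one kernel-verified Lean document; each statement's English description precedes it below -/
import Mathlib

section
/- Let n ≥ 1 be an integer, L > 0 a real number, and a a real number with 0 ≤ a < 2ⁿ whose fractional part a − ⌊a⌋ is at most 1 − 1/L² (i.e., a is well-positioned). Define reals x_n = a and, for i = n−1 down to 0, b_i = min( max( (x_{i+1} − 2ⁱ)·L² + 1 , 0 ) , 1 ) and x_i = x_{i+1} − 2ⁱ·b_i. Then every b_i lies in {0,1} and Σ_{i=0}^{n−1} 2ⁱ·b_i = ⌊a⌋; that is, (b_{n−1},…,b_0) is the binary representation of ⌊a⌋. -/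
/-! The bits come out from the top. At a well-positioned `a` and an integer `k`, the clamped
line `min (max ((a - k) * L ^ 2 + 1) 0) 1` is exactly the indicator of `k ≤ a`: when `a < k`, we
have `⌊a⌋ + 1 ≤ k`, hence `a - k ≤ -1 / L ^ 2`, so the line has already reached `0`.
Subtracting `2 ^ i` times such a bit changes `a` by an integer, so the fractional part, and with it
well-positionedness, is preserved, and the bound `a < 2 ^ (i + 1)` becomes `a < 2 ^ i`. Induction
on the number of bits finishes, since `⌊a⌋ = 0` once `0 ≤ a < 1`. -/

open BigOperators

lemma clamp_eq_one {L a k : ℝ} (h : k ≤ a) :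
    min (max ((a - k) * L ^ 2 + 1) 0) 1 = 1 := by
  have h1 : 0 ≤ (a - k) * L ^ 2 := mul_nonneg (sub_nonneg.2 h) (sq_nonneg L)
  exact min_eq_right (le_max_of_le_left (by linarith))

/-- Well-positionedness makes the clamped line vanish, not merely be small, below the integer
threshold `k`. -/
lemma clamp_eq_zero {L a : ℝ} {k : ℤ} (hL : 0 < L) (hwell : a - ⌊a⌋ ≤ 1 - 1 / L ^ 2)
    (h : a < k) : min (max ((a - k) * L ^ 2 + 1) 0) 1 = 0 := by
  have h1 : (⌊a⌋ : ℝ) + 1 ≤ k := by exact_mod_cast Int.floor_lt.2 h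
  have h2 : a - k ≤ -(1 / L ^ 2) := by linarith
  have h3 : (a - k) * L ^ 2 ≤ -(1 / L ^ 2) * L ^ 2 :=
    mul_le_mul_of_nonneg_right h2 (sq_nonneg L)
  have h4 : -(1 / L ^ 2) * L ^ 2 = -1 := by field_simp
  rw [max_eq_right (by linarith), min_eq_left zero_le_one]

/-- The correctness statement with the start value written as `x n` and `n = 0` allowed, the form
in which induction on `n` applies. -/
lemma extractBits_aux {L : ℝ} (hL : 0 < L) (b x : ℕ → ℝ) (n : ℕ)
    (h0 : 0 ≤ x n) (h1 : x n < 2 ^ n) (hwell : x n - ⌊x n⌋ ≤ 1 - 1 / L ^ 2)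
    (hb : ∀ i < n, b i = min (max ((x (i + 1) - 2 ^ i) * L ^ 2 + 1) 0) 1)
    (hx : ∀ i < n, x i = x (i + 1) - 2 ^ i * b i) :
    (∀ i < n, b i = 0 ∨ b i = 1) ∧
    ∑ i ∈ Finset.range n, 2 ^ i * b i = (⌊x n⌋ : ℝ) := by
  induction n with
  | zero =>
    have : ⌊x 0⌋ = 0 := Int.floor_eq_zero_iff.2 ⟨h0, by simpa using h1⟩
    simp [this]
  | succ n ih =>
    have hbn := hb n n.lt_succ_self
    have hxn := hx n n.lt_succ_self
    rw [pow_succ] at h1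
    have key : (b n = 0 ∨ b n = 1) ∧ 0 ≤ x n ∧ x n < 2 ^ n ∧
        (⌊x n⌋ : ℝ) = ⌊x (n + 1)⌋ - 2 ^ n * b n := by
      rcases le_or_gt ((2 : ℝ) ^ n) (x (n + 1)) with h | h
      · rw [clamp_eq_one h] at hbn
        rw [hbn, mul_one] at hxn
        have hfl : ⌊x n⌋ = ⌊x (n + 1)⌋ - 2 ^ n := by
          rw [hxn, ← Int.floor_sub_intCast]
          push_cast
          rfl
        refine ⟨Or.inr hbn, by linarith, by linarith, ?_⟩
        rw [hfl, hbn]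
        push_cast
        ring
      · have hz := clamp_eq_zero (k := 2 ^ n) hL hwell (by exact_mod_cast h)
        push_cast at hz
        rw [hz] at hbn
        rw [hbn, mul_zero, sub_zero] at hxn
        exact ⟨Or.inl hbn, by linarith, by linarith, by rw [hxn, hbn]; ring⟩
    obtain ⟨hbit, hx0, hx1, hfl⟩ := key
    obtain ⟨hbits, hsum⟩ := ih hx0 hx1 (by rw [hfl]; linarith)
      (fun i hi => hb i (by omega)) (fun i hi => hx i (by omega))
    refine ⟨fun i hi => ?_, ?_⟩
    · rcases Nat.lt_succ_iff_lt_or_eq.1 hi with h | rfl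
      · exact hbits i h
      · exact hbit
    · rw [Finset.sum_range_succ, hsum, hfl]
      ring

/-- Correctness of the `ExtractBits` procedure.  If `a ∈ [0, 2ⁿ)`
is well-positioned (its fractional part is at most `1 − 1/L²`), and the values
`x_n = a`, `b_i = min(max((x_{i+1} − 2ⁱ)·L² + 1, 0), 1)`,
`x_i = x_{i+1} − 2ⁱ·b_i` are computed for `i = n−1` down to `0`, then every
`b_i ∈ {0,1}` and `Σ_{i<n} 2ⁱ·b_i = ⌊a⌋`. -/
theorem extractBits_correct
    (n : ℕ) (hn : 1 ≤ n) (L : ℝ) (hL : 0 < L) (a : ℝ)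
    (ha0 : 0 ≤ a) (ha1 : a < 2 ^ n)
    (hwell : a - ⌊a⌋ ≤ 1 - 1 / L ^ 2)
    (b x : ℕ → ℝ) (hxn : x n = a)
    (hb : ∀ i < n, b i = min (max ((x (i + 1) - 2 ^ i) * L ^ 2 + 1) 0) 1)
    (hx : ∀ i < n, x i = x (i + 1) - 2 ^ i * b i) :
    (∀ i < n, b i = 0 ∨ b i = 1) ∧
    ∑ i ∈ Finset.range n, 2 ^ i * b i = (⌊a⌋ : ℝ) := by
  subst hxn
  exact extractBits_aux hL b x n ha0 ha1 hwell hb hx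
end

section
/- Let L > 16 be a real number and let p ∈ ℝ₊². Among the sixteen points p^j = p + (j−1)·(1/L, 1/L), for j = 1,…,16, at most two are poorly positioned with respect to L; moreover, for each coordinate i ∈ {1,2} there is at most one index j ∈ {1,…,16} for which the i-th coordinate of p^j is poorly positioned. -/
/-!
The poorly positioned reals form a union of open intervals of length `1/L²`, each ending at a
positive integer. Two sampled points differ in each coordinate by `d/L` with `1 ≤ d ≤ 15`. Since
`L > 16`, this gap satisfies `1/L² < d/L < 1 - 1/L²`: it is too large for both values to lie in
the same interval and too small for them to lie in different ones
(`not_poorlyPositioned_of_gap`). So each coordinate is poorly positioned for at most one index,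
and the union of the two coordinates' index sets has at most two elements.
-/

open BigOperators
open scoped Classical

/-- A real number `a ≥ 0` is poorly positioned (w.r.t. `L`) if `a = t + ε` for
some nonnegative integer `t` and some `ε` with `1 − 1/L² < ε < 1`. -/
def PoorlyPositioned (L a : ℝ) : Prop :=
  ∃ t : ℕ, ∃ ε : ℝ, a = t + ε ∧ 1 - 1 / L ^ 2 < ε ∧ ε < 1

/-- Two reals whose gap lies in `[1/L, 15/L]` cannot both be poorly positioned. -/
lemma not_poorlyPositioned_of_gap {L a b : ℝ} (hL : 16 < L) (h1 : 1 / L ≤ b - a)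
    (h15 : b - a ≤ 15 * (1 / L)) (ha : PoorlyPositioned L a) (hb : PoorlyPositioned L b) :
    False := by
  obtain ⟨t, ε, rfl, hε, hε1⟩ := ha
  obtain ⟨s, δ, rfl, hδ, hδ1⟩ := hb
  have hsq : 1 / L ^ 2 = (1 / L) ^ 2 := by rw [one_div_pow]
  have hu : 0 < 1 / L := by positivity
  have hu16 : 1 / L < 1 / 16 := one_div_lt_one_div_of_lt (by norm_num) hL
  rw [hsq] at hε hδ
  generalize 1 / L = u at *
  have hlt : u ^ 2 < u / 16 := by nlinarith
  rcases lt_trichotomy s t with h | rfl | h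
  · have : (s : ℝ) + 1 ≤ t := by exact_mod_cast h
    linarith
  · linarith
  · have : (t : ℝ) + 1 ≤ s := by exact_mod_cast h
    linarith

lemma card_poorlyPositioned_le_one {L : ℝ} (hL : 16 < L) (x : ℝ) :
    (Finset.univ.filter
      (fun j : Fin 16 => PoorlyPositioned L (x + (j : ℝ) * (1 / L)))).card ≤ 1 := by
  have key : ∀ j k : Fin 16, j < k → PoorlyPositioned L (x + (j : ℝ) * (1 / L)) →
      PoorlyPositioned L (x + (k : ℝ) * (1 / L)) → False := by
    intro j k hjk hj hk
    have hu : 0 < 1 / L := by positivity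
    have h1 : (j : ℝ) + 1 ≤ k := by exact_mod_cast hjk
    have h2 : (k : ℝ) ≤ 15 := by exact_mod_cast Nat.le_of_lt_succ k.isLt
    have h3 : (0 : ℝ) ≤ j := by positivity
    exact not_poorlyPositioned_of_gap hL (by nlinarith) (by nlinarith) hj hk
  rw [Finset.card_le_one]
  intro j hj k hk
  rw [Finset.mem_filter] at hj hk
  rcases lt_trichotomy j k with h | h | h
  · exact (key j k h hj.2 hk.2).elim
  · exact h
  · exact (key k j h hk.2 hj.2).elim

/-- For `L > 16` and `p ∈ ℝ₊²`, among the sixteen sampled points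
`p^j = p + (j−1)(1/L, 1/L)`, `j = 1,…,16`, at most two are poorly positioned;
moreover for each coordinate `i` at most one index `j` has the `i`-th
coordinate of `p^j` poorly positioned. -/
theorem sampled_points_few_poorly_positioned
    (L : ℝ) (hL : 16 < L) (p : Fin 2 → ℝ) (hp : ∀ i, 0 ≤ p i) :
    (Finset.univ.filter
        (fun j : Fin 16 => ∃ i : Fin 2,
          PoorlyPositioned L (p i + (j : ℝ) * (1 / L)))).card ≤ 2 ∧
    ∀ i : Fin 2,
      (Finset.univ.filter
        (fun j : Fin 16 =>
          PoorlyPositioned L (p i + (j : ℝ) * (1 / L)))).card ≤ 1 := by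
  refine ⟨?_, fun i => card_poorlyPositioned_le_one hL (p i)⟩
  simp only [Fin.exists_fin_two, Finset.filter_or]
  exact (Finset.card_union_le _ _).trans
    (add_le_add (card_poorlyPositioned_le_one hL (p 0)) (card_poorlyPositioned_le_one hL (p 1)))
end

section
/- Fix n ≥ 1, a real L > 16, and a valid coloring g : G_n → {0,1,2}. Let p ∈ [0, 2ⁿ−1]² and, for j = 1,…,16, let p^j = p + (j−1)·(1/L, 1/L). For each j, let r^j ∈ ℝ² be a vector such that: if p^j is poorly positioned (with respect to L) then ‖r^j‖_∞ ≤ 1, and if p^j is well-positioned then r^j = ζ(p^j). If Σ_{j=1}^{16} r^j = 0 (it suffices that ‖Σ_{j=1}^{16} r^j‖_∞ < 1), then the unit square K_{π(p)} is trichromatic under g. -/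
/-!
The sampled points advance along the diagonal by less than `1` in total, so every `π(p^j)` is a
corner of `K_{π(p)}` lying in the grid, and it is enough to show that each color occurs among the
colors `g(π(p^j))`.

In each coordinate at most one sample is poorly positioned (`eq_of_poorlyPositioned`): two such
samples would be at a distance less than `1/L²` from an integer, whereas distinct samples are
between `1/L > 1/L²` and `15/L < 1 - 1/L²` apart. Hence at most two samples are poor.

Suppose the color `c` does not occur. There is a linear functional
`a` with `a(e^k) = 1` for both `k ≠ c` and `ℓ¹`-norm at most `3` (`exists_functional`). A
well-positioned sample contributes `a(r^j) = 1` and a poor one at least `-3`, so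
`a(∑ r^j) ≥ 14 - 6 = 8`, while `‖∑ r^j‖_∞ < 1` gives `a(∑ r^j) ≤ 3`.
-/

open BigOperators

/-- `π(p) ∈ G_n = {0,…,2ⁿ−1}²`: the `i`-th coordinate is the largest integer in
`{0,…,2ⁿ−1}` that is `≤ p i`. -/
noncomputable def gridPoint (n : ℕ) (p : Fin 2 → ℝ) : Fin 2 → ℤ :=
  fun i => min ⌊p i⌋ (2 ^ n - 1)

/-- The set of corners of the unit square with lowest corner `q`. -/
def unitSquare (q : Fin 2 → ℤ) : Set (Fin 2 → ℤ) :=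
  {q' | ∀ i, q' i = q i ∨ q' i = q i + 1}

/-- The increment vectors `e⁰ = (−1,−1)`, `e¹ = (1,0)`, `e² = (0,1)`. -/
def incVec : Fin 3 → Fin 2 → ℝ :=
  fun c => if c = 0 then ![-1, -1] else if c = 1 then ![1, 0] else ![0, 1]

/-- A coloring `g : G_n → {0,1,2}` is valid if for every boundary point `q` of
the grid: if `q₂ = 0` then `g q = 2`, else if `q₁ = 0` then `g q = 1`,
otherwise `g q = 0`. -/
def ValidColoring (n : ℕ) (g : (Fin 2 → ℤ) → Fin 3) : Prop :=
  ∀ q : Fin 2 → ℤ, (∀ i, 0 ≤ q i ∧ q i ≤ 2 ^ n - 1) →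
    (∃ i, q i = 0 ∨ q i = 2 ^ n - 1) →
    (q 1 = 0 → g q = 2) ∧
    (q 1 ≠ 0 → q 0 = 0 → g q = 1) ∧
    (q 1 ≠ 0 → q 0 ≠ 0 → g q = 0)

/-- Along one coordinate, at most one of the sixteen samples is poorly positioned. -/
lemma eq_of_poorlyPositioned {L x : ℝ} (hL : 16 < L) {j k : Fin 16}
    (hj : PoorlyPositioned L (x + (j : ℝ) * (1 / L)))
    (hk : PoorlyPositioned L (x + (k : ℝ) * (1 / L))) : j = k := by
  wlog hjk : j ≤ k generalizing j k
  · exact (this hk hj (le_of_not_ge hjk)).symm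
  by_contra hne
  have hlt : (j : ℕ) < k := lt_of_le_of_ne hjk fun h => hne (Fin.ext h)
  obtain ⟨t, ε, h1, h2, h3⟩ := hj
  obtain ⟨s, δ, h4, h5, h6⟩ := hk
  have hd2 : 1 / L ^ 2 = (1 / L) ^ 2 := by rw [div_pow, one_pow]
  rw [hd2] at h2 h5
  have hd0 : 0 < 1 / L := by positivity
  have hd16 : 1 / L < 1 / 16 := one_div_lt_one_div_of_lt (by norm_num) hL
  generalize 1 / L = d at *
  have hsq : d ^ 2 < d / 16 := by nlinarith
  have hjk1 : (j : ℝ) + 1 ≤ k := by exact_mod_cast hlt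
  have hk15 : (k : ℝ) ≤ 15 := by exact_mod_cast Nat.le_of_lt_succ k.isLt
  have hj0 : (0 : ℝ) ≤ (j : ℝ) := Nat.cast_nonneg _
  have hlow : d ≤ k * d - j * d := by nlinarith
  have hupp : k * d - j * d ≤ 15 * d := by nlinarith
  -- The integer `s - t` would lie strictly between `0` and `1`.
  have hts : t < s := by
    have : (t : ℝ) < s := by linarith
    exact_mod_cast this
  have hst : s < t + 1 := by
    have : (s : ℝ) < t + 1 := by linarith
    exact_mod_cast this
  omega

/-- The two increment vectors of color other than `c` lie on a line `a₀ x + a₁ y = 1` whose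
coefficients satisfy `|a₀| + |a₁| ≤ 3`. -/
lemma exists_functional (c : Fin 3) :
    ∃ a : Fin 2 → ℝ, |a 0| + |a 1| ≤ 3 ∧
      ∀ k, k ≠ c → a 0 * incVec k 0 + a 1 * incVec k 1 = 1 := by
  fin_cases c
  · refine ⟨![1, 1], by norm_num, fun k hk => ?_⟩
    fin_cases k <;> first | exact absurd rfl hk | norm_num [incVec]
  · refine ⟨![-2, 1], by norm_num, fun k hk => ?_⟩
    fin_cases k <;> first | exact absurd rfl hk | norm_num [incVec]
  · refine ⟨![1, -2], by norm_num, fun k hk => ?_⟩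
    fin_cases k <;> first | exact absurd rfl hk | norm_num [incVec]

lemma abs_functional_le {a v : Fin 2 → ℝ} (ha : |a 0| + |a 1| ≤ 3) (hv : ∀ i, |v i| ≤ 1) :
    |a 0 * v 0 + a 1 * v 1| ≤ 3 := by
  calc |a 0 * v 0 + a 1 * v 1| ≤ |a 0 * v 0| + |a 1 * v 1| := abs_add_le _ _
    _ = |a 0| * |v 0| + |a 1| * |v 1| := by rw [abs_mul, abs_mul]
    _ ≤ |a 0| * 1 + |a 1| * 1 := by gcongr <;> exact hv _
    _ ≤ 3 := by linarith

lemma gridPoint_mem_grid (n : ℕ) {p : Fin 2 → ℝ} (hp : ∀ i, 0 ≤ p i) (i : Fin 2) :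
    0 ≤ gridPoint n p i ∧ gridPoint n p i ≤ 2 ^ n - 1 := by
  have h2 : (1 : ℤ) ≤ 2 ^ n := one_le_pow₀ (by norm_num)
  exact ⟨le_min (Int.floor_nonneg.2 (hp i)) (by linarith), min_le_right _ _⟩

/-- A shift by less than `1` in each coordinate stays among the corners of the unit square. -/
lemma gridPoint_mem_unitSquare (n : ℕ) {p q : Fin 2 → ℝ} (h : ∀ i, p i ≤ q i)
    (h' : ∀ i, q i ≤ p i + 1) : gridPoint n q ∈ unitSquare (gridPoint n p) := by
  intro i
  have h1 : ⌊p i⌋ ≤ ⌊q i⌋ := Int.floor_mono (h i)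
  have h2 : ⌊q i⌋ ≤ ⌊p i⌋ + 1 := by
    rw [← Int.floor_add_one]
    exact Int.floor_mono (h' i)
  simp only [gridPoint]
  generalize (2 : ℤ) ^ n - 1 = m
  omega

/-- sampling lemma.  If every sampled point `p^j = p + (j−1)(1/L,1/L)`
contributes a vector `r^j` which is `ζ(p^j) = e^{g(π(p^j))}` when `p^j` is
well-positioned and has `‖r^j‖_∞ ≤ 1` when it is poorly positioned, and
`‖Σ_j r^j‖_∞ < 1` (in particular if `Σ_j r^j = 0`), then the unit square
`K_{π(p)}` is trichromatic under `g`. -/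
theorem sampling_lemma_trichromatic
    (n : ℕ) (hn : 1 ≤ n) (L : ℝ) (hL : 16 < L)
    (g : (Fin 2 → ℤ) → Fin 3) (hg : ValidColoring n g)
    (p : Fin 2 → ℝ) (hp : ∀ i, 0 ≤ p i ∧ p i ≤ 2 ^ n - 1)
    (r : Fin 16 → Fin 2 → ℝ)
    (hpoor : ∀ j : Fin 16,
      (∃ i : Fin 2, PoorlyPositioned L (p i + (j : ℝ) * (1 / L))) →
        ∀ i, |r j i| ≤ 1)
    (hwell : ∀ j : Fin 16,
      (∀ i : Fin 2, ¬ PoorlyPositioned L (p i + (j : ℝ) * (1 / L))) →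
        r j = incVec (g (gridPoint n (fun i => p i + (j : ℝ) * (1 / L)))))
    (hsum : ∀ i : Fin 2, |∑ j : Fin 16, r j i| < 1) :
    ∀ c : Fin 3, ∃ q ∈ unitSquare (gridPoint n p),
      (∀ i, 0 ≤ q i ∧ q i ≤ 2 ^ n - 1) ∧ g q = c := by
  classical
  intro c
  by_contra hc
  have hd0 : 0 < 1 / L := by positivity
  have hd16 : 1 / L < 1 / 16 := one_div_lt_one_div_of_lt (by norm_num) hL
  have hcol : ∀ j : Fin 16, g (gridPoint n (fun i => p i + (j : ℝ) * (1 / L))) ≠ c := by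
    intro j hj
    have hj15 : (j : ℝ) ≤ 15 := by exact_mod_cast Nat.le_of_lt_succ j.isLt
    have hs0 : 0 ≤ (j : ℝ) * (1 / L) := by positivity
    have hs1 : (j : ℝ) * (1 / L) ≤ 1 := by nlinarith
    exact hc ⟨_, gridPoint_mem_unitSquare n (fun i => by linarith) (fun i => by linarith),
      gridPoint_mem_grid n (fun i => add_nonneg (hp i).1 hs0), hj⟩
  obtain ⟨a, ha, hval⟩ := exists_functional c
  let P : Fin 2 → Finset (Fin 16) := fun i =>
    Finset.univ.filter fun j : Fin 16 => PoorlyPositioned L (p i + (j : ℝ) * (1 / L))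
  have hP : ∀ i, (P i).card ≤ 1 := fun i => Finset.card_le_one.2 fun j hj k hk =>
    eq_of_poorlyPositioned hL (Finset.mem_filter.1 hj).2 (Finset.mem_filter.1 hk).2
  have hcard : (((P 0 ∪ P 1).card : ℕ) : ℝ) ≤ 2 := by
    exact_mod_cast (Finset.card_union_le _ _).trans (add_le_add (hP 0) (hP 1))
  have hterm : ∀ j : Fin 16,
      1 - 4 * (if j ∈ P 0 ∪ P 1 then (1 : ℝ) else 0) ≤ a 0 * r j 0 + a 1 * r j 1 := by
    intro j
    have hmem : j ∈ P 0 ∪ P 1 ↔ ∃ i : Fin 2, PoorlyPositioned L (p i + (j : ℝ) * (1 / L)) := by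
      simp [P, Fin.exists_fin_two]
    split_ifs with h
    · have := (abs_le.1 (abs_functional_le ha (hpoor j (hmem.1 h)))).1
      linarith
    · rw [hwell j (not_exists.1 (mt hmem.2 h)), hval _ (hcol j)]
      norm_num
  have hlow : (16 : ℝ) - 4 * (P 0 ∪ P 1).card ≤ ∑ j, (a 0 * r j 0 + a 1 * r j 1) := by
    refine le_trans (le_of_eq ?_) (Finset.sum_le_sum fun j _ => hterm j)
    rw [Finset.sum_sub_distrib, ← Finset.mul_sum, Finset.sum_ite_mem]
    simp
  rw [Finset.sum_add_distrib, ← Finset.mul_sum, ← Finset.mul_sum] at hlow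
  have hupp := (abs_le.1 (abs_functional_le (v := fun i => ∑ j, r j i) ha
    fun i => (hsum i).le)).2
  linarith
end

section
/- Let A be an m×m real lower-triangular matrix (A_{ij} = 0 for j > i) with all diagonal entries equal to 1, and let c = ConstructCost(A). Then for every q ∈ ℝ^m and every x ∈ ℝ^m with Ax ≥ q and x ≥ 0 (componentwise), the following are equivalent: (a) x is an optimal solution of the linear program min{cᵀx' : Ax' ≥ q, x' ≥ 0}, i.e., cᵀx ≤ cᵀx' for every x' with Ax' ≥ q and x' ≥ 0; (b) x_i·((Ax)_i − q_i) = 0 for every i ∈ {1,…,m}. -/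
/-!
The proof is linear programming duality with strict complementarity. For every set `S` of
indices, backward substitution produces a nonnegative vector `y` with `(Aᵀ y)_i = c_i` and
`y_i ≥ 1` on `S`, and with `y_i = 0` and `(Aᵀ y)_i ≤ c_i - 1` off `S` (`exists_dual`). This is
where the choice of `c` enters: the recursion keeps `0 ≤ y ≤ β`, so the off-diagonal part of
`(Aᵀ y)_i` is at most `c_i - 1` in absolute value.

If `z` is feasible and complementary and `S = {i | 0 < z_i}`, then `cᵀ z = yᵀ q`, and for every
feasible `x'`
`cᵀ x' - cᵀ z = ∑ i, (y_i ((A x')_i - q_i) + (c_i - (Aᵀ y)_i) x'_i) ≥ 0`,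
so `z` is optimal. Conversely, forward substitution gives some complementary feasible `z`
(`exists_complementary`); if `x` is optimal, all the summands above vanish at `x' = x`, and since
`y_i` or `c_i - (Aᵀ y)_i` is positive for each `i`, `x` is complementary.
-/

open Matrix BigOperators
open scoped Classical

/-- A system in which each unknown is a function of a linear combination of the preceding ones
(with respect to a well-founded relation) can be solved by substitution. -/
lemma exists_substitution {ι : Type*} [Fintype ι] (r : ι → ι → Prop) (hr : WellFounded r)
    (M : ι → ι → ℝ) (φ : ι → ℝ → ℝ) :
    ∃ f : ι → ℝ, ∀ i, f i = φ i (∑ j ∈ Finset.univ.filter (fun j => r j i), M i j * f j) := by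
  refine ⟨hr.fix (fun i g => φ i (∑ j, if h : r j i then M i j * g j h else 0)), fun i => ?_⟩
  rw [hr.fix_eq, Finset.sum_filter]
  simp only [dite_eq_ite]

/-- Forward substitution: the complementarity problem of a unit lower-triangular matrix is
solvable. -/
lemma exists_complementary {m : ℕ} (A : Matrix (Fin m) (Fin m) ℝ)
    (hlow : ∀ i j : Fin m, i < j → A i j = 0) (hdiag : ∀ i, A i i = 1) (q : Fin m → ℝ) :
    ∃ z : Fin m → ℝ, (∀ i, q i ≤ A.mulVec z i) ∧ (∀ i, 0 ≤ z i) ∧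
      ∀ i, z i * (A.mulVec z i - q i) = 0 := by
  obtain ⟨z, hz⟩ : ∃ z : Fin m → ℝ, ∀ i, z i =
      max 0 (q i - ∑ j ∈ Finset.univ.filter (fun j => j < i), A i j * z j) := by
    convert exists_substitution (fun j i : Fin m => j < i) wellFounded_lt
      (fun i j => A i j) (fun i s => max 0 (q i - s))
  have hA : ∀ i, A.mulVec z i =
      z i + ∑ j ∈ Finset.univ.filter (fun j => j < i), A i j * z j := by
    intro i
    rw [Matrix.mulVec, dotProduct, ← Finset.add_sum_erase _ _ (Finset.mem_univ i), hdiag, one_mul]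
    congr 1
    symm
    apply Finset.sum_subset
    · intro j hj
      simpa using (Finset.mem_filter.1 hj).2.ne
    · intro j hj hj'
      have h1 : j ≠ i := (Finset.mem_erase.1 hj).1
      have h2 : ¬ j < i := by simpa using hj'
      rw [hlow i j (lt_of_le_of_ne (not_lt.1 h2) h1.symm), zero_mul]
  refine ⟨z, fun i => ?_, fun i => ?_, fun i => ?_⟩
  · rw [hA]
    linarith [hz i, le_max_right 0 (q i - ∑ j ∈ Finset.univ.filter (fun j => j < i), A i j * z j)]
  · rw [hz]
    exact le_max_left _ _
  · rw [hA]
    rcases max_choice 0 (q i - ∑ j ∈ Finset.univ.filter (fun j => j < i), A i j * z j) with h | h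
    · rw [(hz i).trans h, zero_mul]
    · have := (hz i).trans h
      exact mul_eq_zero_of_right _ (by linarith)

/-- Backward substitution: any set `S` of indices is the support of a dual feasible vector whose
dual constraints are tight exactly on `S`, with all margins at least `1`. -/
lemma exists_dual {m : ℕ} (A : Matrix (Fin m) (Fin m) ℝ)
    (hlow : ∀ i j : Fin m, i < j → A i j = 0) (hdiag : ∀ i, A i i = 1)
    (beta c : Fin m → ℝ)
    (hc : ∀ i, c i = (∑ j ∈ Finset.univ.filter (fun j => i < j), |A j i| * beta j) + 1)
    (hbeta : ∀ i, beta i = c i + ∑ j ∈ Finset.univ.filter (fun j => i < j), |A j i| * beta j)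
    (S : Set (Fin m)) :
    ∃ y : Fin m → ℝ, (∀ i ∈ S, 1 ≤ y i ∧ Matrix.vecMul y A i = c i) ∧
      ∀ i ∉ S, y i = 0 ∧ Matrix.vecMul y A i ≤ c i - 1 := by
  obtain ⟨y, hy⟩ : ∃ y : Fin m → ℝ, ∀ i, y i =
      if i ∈ S then c i - ∑ j ∈ Finset.univ.filter (fun j => i < j), A j i * y j else 0 := by
    convert exists_substitution (fun j i : Fin m => i < j) wellFounded_gt
      (fun i j => A j i) (fun i s => if i ∈ S then c i - s else 0)
  have hA : ∀ i, Matrix.vecMul y A i =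
      y i + ∑ j ∈ Finset.univ.filter (fun j => i < j), A j i * y j := by
    intro i
    rw [Matrix.vecMul, dotProduct, ← Finset.add_sum_erase _ _ (Finset.mem_univ i), hdiag, mul_one]
    congr 1
    symm
    simp only [mul_comm (A _ _)]
    apply Finset.sum_subset
    · intro j hj
      simpa using (Finset.mem_filter.1 hj).2.ne'
    · intro j hj hj'
      have h1 : j ≠ i := (Finset.mem_erase.1 hj).1
      have h2 : ¬ i < j := by simpa using hj'
      rw [hlow j i (lt_of_le_of_ne (not_lt.1 h2) h1), mul_zero]
  have bound : ∀ i, (∀ j, i < j → |y j| ≤ beta j) →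
      |∑ j ∈ Finset.univ.filter (fun j => i < j), A j i * y j| ≤ c i - 1 := by
    intro i h
    rw [hc i, add_sub_cancel_right]
    refine (Finset.abs_sum_le_sum_abs _ _).trans (Finset.sum_le_sum fun j hj => ?_)
    rw [abs_mul]
    exact mul_le_mul_of_nonneg_left (h j (Finset.mem_filter.1 hj).2) (abs_nonneg _)
  have hyb : ∀ i, |y i| ≤ beta i := by
    intro i
    induction i using (wellFounded_gt (α := Fin m)).induction with
    | _ i ih =>
      have hb := bound i ih
      obtain ⟨h1, h2⟩ := abs_le.1 hb
      have h3 := hbeta i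
      have h4 := hc i
      have h5 := (abs_nonneg _).trans hb
      rw [hy i]
      split_ifs
      · rw [abs_le]
        constructor <;> linarith
      · rw [abs_zero]
        linarith
  have key := fun i => abs_le.1 (bound i fun j _ => hyb j)
  refine ⟨y, fun i hi => ?_, fun i hi => ?_⟩
  · have h := hy i
    rw [if_pos hi] at h
    rw [hA]
    constructor <;> linarith [key i]
  · have h := hy i
    rw [if_neg hi] at h
    rw [hA]
    exact ⟨h, by linarith [key i]⟩

/-- The duality gap splits into the primal and the dual slack terms. -/
lemma gap_eq {m : ℕ} (A : Matrix (Fin m) (Fin m) ℝ) (c q x y : Fin m → ℝ) :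
    c ⬝ᵥ x - y ⬝ᵥ q =
      ∑ i, (y i * (A.mulVec x i - q i) + (c i - Matrix.vecMul y A i) * x i) := by
  have h : y ⬝ᵥ A.mulVec x = Matrix.vecMul y A ⬝ᵥ x := Matrix.dotProduct_mulVec _ _ _
  simp only [dotProduct] at *
  simp only [mul_sub, sub_mul, Finset.sum_add_distrib, Finset.sum_sub_distrib]
  linarith

/-- Let `A` be lower-triangular with unit diagonal and let
`β, c` be as produced by `ConstructCost(A)` (characterized by the backward
recursion `c_i = Σ_{j>i} |A_{ji}| β_j + 1`, `β_i = c_i + Σ_{j>i} |A_{ji}| β_j`,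
which in particular gives `c_m = β_m = 1`).  Then for every `q` and every
feasible `x` (`Ax ≥ q`, `x ≥ 0`), `x` is optimal for
`min{cᵀx' : Ax' ≥ q, x' ≥ 0}` iff `x_i((Ax)_i − q_i) = 0` for all `i`. -/
theorem constructCost_optimal_iff_complementary
    (m : ℕ) (hm : 1 ≤ m) (A : Matrix (Fin m) (Fin m) ℝ)
    (hlow : ∀ i j : Fin m, i < j → A i j = 0)
    (hdiag : ∀ i, A i i = 1)
    (beta c : Fin m → ℝ)
    (hc : ∀ i, c i = (∑ j ∈ Finset.univ.filter (fun j => i < j), |A j i| * beta j) + 1)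
    (hbeta : ∀ i, beta i = c i + ∑ j ∈ Finset.univ.filter (fun j => i < j), |A j i| * beta j)
    (q x : Fin m → ℝ)
    (hfeas : (∀ i, q i ≤ A.mulVec x i) ∧ (∀ i, 0 ≤ x i)) :
    (∀ x' : Fin m → ℝ, ((∀ i, q i ≤ A.mulVec x' i) ∧ (∀ i, 0 ≤ x' i)) →
        c ⬝ᵥ x ≤ c ⬝ᵥ x')
    ↔
    (∀ i, x i * (A.mulVec x i - q i) = 0) := by
  -- Strictly complementary dual certificate for a feasible complementary `z`.
  have cert : ∀ z : Fin m → ℝ, (∀ i, 0 ≤ z i) → (∀ i, z i * (A.mulVec z i - q i) = 0) →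
      ∃ y : Fin m → ℝ, c ⬝ᵥ z = y ⬝ᵥ q ∧ (∀ i, 0 ≤ y i) ∧
        (∀ i, 0 ≤ c i - Matrix.vecMul y A i) ∧
        ∀ i, 0 < y i ∨ 0 < c i - Matrix.vecMul y A i := by
    intro z hz0 hz
    obtain ⟨y, h1, h2⟩ := exists_dual A hlow hdiag beta c hc hbeta {i | 0 < z i}
    refine ⟨y, ?_, fun i => ?_, fun i => ?_, fun i => ?_⟩
    · rw [← sub_eq_zero, gap_eq A]
      refine Finset.sum_eq_zero fun i _ => ?_
      by_cases hi : 0 < z i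
      · have h3 := (mul_eq_zero.1 (hz i)).resolve_left hi.ne'
        rw [h3, (h1 i hi).2]
        ring
      · have h3 : z i = 0 := le_antisymm (not_lt.1 hi) (hz0 i)
        rw [h3, (h2 i hi).1]
        ring
    all_goals
      by_cases hi : 0 < z i
      · have := h1 i hi
        first
          | linarith
          | exact Or.inl (by linarith)
      · have := h2 i hi
        first
          | linarith
          | exact Or.inr (by linarith)
  have terms : ∀ x' y : Fin m → ℝ, ((∀ i, q i ≤ A.mulVec x' i) ∧ (∀ i, 0 ≤ x' i)) →
      (∀ i, 0 ≤ y i) → (∀ i, 0 ≤ c i - Matrix.vecMul y A i) →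
      ∀ i, 0 ≤ y i * (A.mulVec x' i - q i) ∧ 0 ≤ (c i - Matrix.vecMul y A i) * x' i :=
    fun x' y hx' hy hs i =>
      ⟨mul_nonneg (hy i) (sub_nonneg.2 (hx'.1 i)), mul_nonneg (hs i) (hx'.2 i)⟩
  constructor
  · intro hopt
    obtain ⟨z, hzq, hz0, hz⟩ := exists_complementary A hlow hdiag q
    obtain ⟨y, hval, hy, hs, hstrict⟩ := cert z hz0 hz
    have ht := terms x y hfeas hy hs
    have hnn : ∀ i ∈ Finset.univ,
        0 ≤ y i * (A.mulVec x i - q i) + (c i - Matrix.vecMul y A i) * x i :=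
      fun i _ => add_nonneg (ht i).1 (ht i).2
    have hsum : ∑ i, (y i * (A.mulVec x i - q i) + (c i - Matrix.vecMul y A i) * x i) = 0 := by
      refine le_antisymm ?_ (Finset.sum_nonneg hnn)
      rw [← gap_eq A]
      linarith [hopt z ⟨hzq, hz0⟩]
    intro i
    have h0 := (Finset.sum_eq_zero_iff_of_nonneg hnn).1 hsum i (Finset.mem_univ i)
    obtain ⟨h1, h2⟩ := ht i
    rcases hstrict i with h | h
    · exact mul_eq_zero_of_right _
        ((mul_eq_zero.1 (by linarith : y i * (A.mulVec x i - q i) = 0)).resolve_left h.ne')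
    · exact mul_eq_zero_of_left
        ((mul_eq_zero.1 (by linarith : (c i - Matrix.vecMul y A i) * x i = 0)).resolve_left h.ne') _
  · intro hcomp x' hx'
    obtain ⟨y, hval, hy, hs, -⟩ := cert x hfeas.2 hcomp
    have hgap : 0 ≤ c ⬝ᵥ x' - y ⬝ᵥ q := by
      rw [gap_eq A]
      exact Finset.sum_nonneg fun i _ =>
        add_nonneg (terms x' y hx' hy hs i).1 (terms x' y hx' hy hs i).2
    linarith
end

section
/- Let A be an m×m real lower-triangular matrix (A_{ij} = 0 for j > i) with all diagonal entries equal to 1, let β, c ∈ ℝ^m be as in ConstructCost(A), and let q ∈ ℝ^m. Suppose x, y ∈ ℝ^m satisfy primal feasibility (Ax ≥ q, x ≥ 0), dual feasibility (Aᵀy ≤ c, y ≥ 0), and complementary slackness: y_i·((Ax)_i − q_i) = 0 and x_i·((Aᵀy)_i − c_i) = 0 for all i. Then for every i ∈ {1,…,m}: y_i ≤ β_i, and if x_i > 0 then y_i > 0. -/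
open Matrix BigOperators
open scoped Classical

/-!
Because `A` is lower triangular with unit diagonal,
`(Aᵀy)_i = y_i + ∑_{j>i} A_{ji} y_j`. If `0 ≤ y_j ≤ β_j` for all `j > i`, the sum is at most
`S_i := ∑_{j>i} |A_{ji}| β_j` in absolute value. Dual feasibility then gives
`y_i ≤ c_i + S_i = β_i`, so `y ≤ β` follows by downward induction. If `x_i > 0`, complementary
slackness makes the dual constraint tight, and `y_i ≥ c_i - S_i = 1`.
-/

lemma transpose_mulVec_eq_add_sum_gt {m : ℕ} {A : Matrix (Fin m) (Fin m) ℝ}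
    (hlow : ∀ i j : Fin m, i < j → A i j = 0) (hdiag : ∀ i, A i i = 1)
    (y : Fin m → ℝ) (i : Fin m) :
    A.transpose.mulVec y i
      = y i + ∑ j ∈ Finset.univ.filter (fun j => i < j), A j i * y j := by
  have h : A.transpose.mulVec y i = ∑ j, A j i * y j := rfl
  rw [h, ← Finset.add_sum_erase _ _ (Finset.mem_univ i), hdiag, one_mul]
  congr 1
  symm
  apply Finset.sum_subset
  · intro j hj
    simpa using (Finset.mem_filter.mp hj).2.ne'
  · intro j hj hj'
    have hne : j ≠ i := Finset.ne_of_mem_erase hj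
    have hle : j ≤ i := by simpa using hj'
    rw [hlow j i (lt_of_le_of_ne hle hne), zero_mul]

lemma abs_sum_mul_le {ι : Type*} (s : Finset ι) (a y b : ι → ℝ)
    (hy : ∀ j ∈ s, 0 ≤ y j) (hyb : ∀ j ∈ s, y j ≤ b j) :
    |∑ j ∈ s, a j * y j| ≤ ∑ j ∈ s, |a j| * b j := by
  refine (Finset.abs_sum_le_sum_abs _ _).trans (Finset.sum_le_sum fun j hj => ?_)
  rw [abs_mul, abs_of_nonneg (hy j hj)]
  exact mul_le_mul_of_nonneg_left (hyb j hj) (abs_nonneg _)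

/-- Let `A` be lower-triangular with unit diagonal, `β, c` as in
`ConstructCost(A)`, and let `x, y` satisfy primal feasibility (`Ax ≥ q`,
`x ≥ 0`), dual feasibility (`Aᵀy ≤ c`, `y ≥ 0`) and complementary slackness.
Then for every `i`, `y_i ≤ β_i` and `x_i > 0 → y_i > 0`. -/
theorem dual_bounded_and_positive
    (m : ℕ) (hm : 1 ≤ m) (A : Matrix (Fin m) (Fin m) ℝ)
    (hlow : ∀ i j : Fin m, i < j → A i j = 0)
    (hdiag : ∀ i, A i i = 1)
    (beta c : Fin m → ℝ)
    (hc : ∀ i, c i = (∑ j ∈ Finset.univ.filter (fun j => i < j), |A j i| * beta j) + 1)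
    (hbeta : ∀ i, beta i = c i + ∑ j ∈ Finset.univ.filter (fun j => i < j), |A j i| * beta j)
    (q : Fin m → ℝ) (x y : Fin m → ℝ)
    (hprimal : (∀ i, q i ≤ A.mulVec x i) ∧ (∀ i, 0 ≤ x i))
    (hdual : (∀ i, A.transpose.mulVec y i ≤ c i) ∧ (∀ i, 0 ≤ y i))
    (hcs : ∀ i, y i * (A.mulVec x i - q i) = 0 ∧
        x i * (A.transpose.mulVec y i - c i) = 0) :
    ∀ i, y i ≤ beta i ∧ (0 < x i → 0 < y i) := by
  have hsum : ∀ i, (∀ j, i < j → y j ≤ beta j) →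
      |∑ j ∈ Finset.univ.filter (fun j => i < j), A j i * y j|
        ≤ ∑ j ∈ Finset.univ.filter (fun j => i < j), |A j i| * beta j := fun i h =>
    abs_sum_mul_le _ (fun j => A j i) y beta (fun j _ => hdual.2 j)
      (fun j hj => h j (Finset.mem_filter.mp hj).2)
  have hle : ∀ i, y i ≤ beta i := by
    intro i
    induction i using WellFoundedGT.induction with
    | ind i ih =>
      have h1 := (abs_le.mp (hsum i ih)).1
      have h2 := hdual.1 i
      rw [transpose_mulVec_eq_add_sum_gt hlow hdiag] at h2
      linarith [hbeta i]
  refine fun i => ⟨hle i, fun hx => ?_⟩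
  have h1 := (abs_le.mp (hsum i fun j _ => hle j)).2
  have h2 := (mul_eq_zero.mp (hcs i).2).resolve_left hx.ne'
  rw [transpose_mulVec_eq_add_sum_gt hlow hdiag] at h2
  linarith [hc i]
end

section
/- Let A be an m×m real lower-triangular matrix (A_{ij} = 0 for j > i) with all diagonal entries equal to 1, and let q ∈ ℝ^m. Then there is exactly one x ∈ ℝ^m satisfying x ≥ 0, Ax ≥ q, and x_i·((Ax)_i − q_i) = 0 for all i ∈ {1,…,m}; it is given by the recursion x_i = max(0, q_i − Σ_{j<i} A_{ij}·x_j). Consequently, the linear program min{cᵀx : Ax ≥ q, x ≥ 0} with c = ConstructCost(A) has a unique optimal solution. -/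
/-!
Row `i` of `A x` is `∑_{j<i} A_{ij} x_j + x_i`, so the three complementarity conditions at `i` say
exactly that `x_i = max(0, q_i - ∑_{j<i} A_{ij} x_j)` (`lcp_iff_recursion`). This recursion has
exactly one solution, by well-founded recursion on `i`.

For the linear program, let `x` be the complementarity solution, `y` feasible, and `d = y - x`.
Where `x_i = 0` we have `d_i ≥ 0`, and where `x_i > 0` row `i` of `A x ≥ q` is tight, so
`(A d)_i ≥ 0`. In both cases the negative part satisfies `d_i⁻ ≤ ∑_{j<i} |A_{ij}| |d_j|`.
Put `s_i = ∑_{j>i} |A_{ji}| β_j`, so that `c = s + 1` and `β = 2 s + 1`. Weighting by `β ≥ 0` and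
exchanging the order of summation gives `∑ β_i d_i⁻ ≤ ∑ s_i |d_i|`, which rearranges to
`∑ d_i⁺ ≤ c ⬝ d` (`sum_posPart_le_cost`). Hence `x` is optimal. If `y` is optimal too, then `d⁺ = 0`,
and the bound on `d_i⁻` forces `d = 0` by strong induction on `i`.
-/


open Matrix BigOperators
open scoped Classical

lemma mulVec_unit_lower {m : ℕ} {A : Matrix (Fin m) (Fin m) ℝ}
    (hlow : ∀ i j : Fin m, i < j → A i j = 0) (hdiag : ∀ i, A i i = 1)
    (x : Fin m → ℝ) (i : Fin m) :
    A.mulVec x i = (∑ j ∈ Finset.univ.filter (fun j => j < i), A i j * x j) + x i := by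
  have h : ∀ j, A i j * x j = (if j < i then A i j * x j else 0) + (if j = i then x i else 0) := by
    intro j
    rcases lt_trichotomy j i with h | h | h
    · simp [h, h.ne]
    · subst h; simp [hdiag]
    · simp [hlow i j h, h.ne']
  rw [Matrix.mulVec, dotProduct, Finset.sum_congr rfl (fun j _ => h j), Finset.sum_add_distrib,
    Finset.sum_filter]
  simp

lemma scalar_lcp_iff (x t q : ℝ) :
    (0 ≤ x ∧ q ≤ t + x ∧ x * (t + x - q) = 0) ↔ x = max 0 (q - t) := by
  constructor
  · rintro ⟨h0, h1, h2⟩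
    rcases mul_eq_zero.1 h2 with h | h
    · rw [max_eq_left] <;> linarith
    · rw [max_eq_right] <;> linarith
  · rintro rfl
    refine ⟨le_max_left _ _, by linarith [le_max_right 0 (q - t)], ?_⟩
    rcases le_total 0 (q - t) with h | h
    · rw [max_eq_right h]; ring
    · rw [max_eq_left h]; ring

lemma lcp_iff_recursion {m : ℕ} {A : Matrix (Fin m) (Fin m) ℝ}
    (hlow : ∀ i j : Fin m, i < j → A i j = 0) (hdiag : ∀ i, A i i = 1) (q x : Fin m → ℝ) :
    ((∀ i, 0 ≤ x i) ∧ (∀ i, q i ≤ A.mulVec x i) ∧ (∀ i, x i * (A.mulVec x i - q i) = 0)) ↔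
      ∀ i, x i =
        max 0 (q i - ∑ j ∈ Finset.univ.filter (fun j => j < i), A i j * x j) := by
  rw [← forall_and, ← forall_and]
  refine forall_congr' fun i => ?_
  rw [mulVec_unit_lower hlow hdiag, scalar_lcp_iff]

lemma exists_recursion {m : ℕ} (A : Matrix (Fin m) (Fin m) ℝ) (q : Fin m → ℝ) :
    ∃ x : Fin m → ℝ, ∀ i, x i =
      max 0 (q i - ∑ j ∈ Finset.univ.filter (fun j => j < i), A i j * x j) := by
  let F : (i : Fin m) → ((j : Fin m) → j < i → ℝ) → ℝ := fun i prev =>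
    max 0 (q i - ∑ j, if h : j < i then A i j * prev j h else 0)
  refine ⟨(wellFounded_lt (α := Fin m)).fix F, fun i => ?_⟩
  rw [WellFounded.fix_eq, Finset.sum_filter]
  simp only [F, dite_eq_ite]

lemma recursion_unique {m : ℕ} {A : Matrix (Fin m) (Fin m) ℝ} {q x y : Fin m → ℝ}
    (hx : ∀ i, x i = max 0 (q i - ∑ j ∈ Finset.univ.filter (fun j => j < i), A i j * x j))
    (hy : ∀ i, y i = max 0 (q i - ∑ j ∈ Finset.univ.filter (fun j => j < i), A i j * y j)) :
    x = y := by
  funext i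
  induction i using WellFoundedLT.induction with
  | ind i ih =>
    rw [hx, hy, Finset.sum_congr rfl fun j hj => by rw [ih j (Finset.mem_filter.1 hj).2]]

lemma beta_nonneg {m : ℕ} {A : Matrix (Fin m) (Fin m) ℝ} {beta c : Fin m → ℝ}
    (hc : ∀ i, c i = (∑ j ∈ Finset.univ.filter (fun j => i < j), |A j i| * beta j) + 1)
    (hbeta : ∀ i, beta i = c i + ∑ j ∈ Finset.univ.filter (fun j => i < j), |A j i| * beta j)
    (i : Fin m) : 0 ≤ beta i := by
  induction i using WellFoundedGT.induction with
  | ind i ih =>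
    have : 0 ≤ ∑ j ∈ Finset.univ.filter (fun j => i < j), |A j i| * beta j :=
      Finset.sum_nonneg fun j hj =>
        mul_nonneg (abs_nonneg _) (ih j (Finset.mem_filter.1 hj).2)
    rw [hbeta, hc]
    linarith

/-- The negative part of a feasible displacement `y - x` from the complementarity solution `x`
is controlled by the earlier coordinates of the displacement. -/
lemma negPart_displacement_le {m : ℕ} {A : Matrix (Fin m) (Fin m) ℝ}
    (hlow : ∀ i j : Fin m, i < j → A i j = 0) (hdiag : ∀ i, A i i = 1) {q x y : Fin m → ℝ}
    (hx : ∀ i, x i * (A.mulVec x i - q i) = 0)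
    (hy : ∀ i, q i ≤ A.mulVec y i) (hy0 : ∀ i, 0 ≤ y i) (i : Fin m) :
    (y i - x i)⁻ ≤ ∑ j ∈ Finset.univ.filter (fun j => j < i), |A i j| * |y j - x j| := by
  have hs : 0 ≤ ∑ j ∈ Finset.univ.filter (fun j => j < i), |A i j| * |y j - x j| :=
    Finset.sum_nonneg fun j _ => by positivity
  rw [negPart_def]
  refine sup_le ?_ hs
  rcases mul_eq_zero.1 (hx i) with h | h
  · linarith [hy0 i]
  · have hle : ∑ j ∈ Finset.univ.filter (fun j => j < i), A i j * (y j - x j) ≤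
        ∑ j ∈ Finset.univ.filter (fun j => j < i), |A i j| * |y j - x j| :=
      Finset.sum_le_sum fun j _ => (le_abs_self _).trans (abs_mul _ _).le
    have hq := hy i
    rw [mulVec_unit_lower hlow hdiag] at h hq
    simp only [mul_sub, Finset.sum_sub_distrib] at hle
    linarith

/-- The defining property of `ConstructCost`: it dominates the total positive part on every
displacement whose negative part is controlled by its earlier coordinates. -/
lemma sum_posPart_le_cost {m : ℕ} {A : Matrix (Fin m) (Fin m) ℝ} {beta c d : Fin m → ℝ}
    (hc : ∀ i, c i = (∑ j ∈ Finset.univ.filter (fun j => i < j), |A j i| * beta j) + 1)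
    (hbeta : ∀ i, beta i = c i + ∑ j ∈ Finset.univ.filter (fun j => i < j), |A j i| * beta j)
    (hd : ∀ i, (d i)⁻ ≤ ∑ j ∈ Finset.univ.filter (fun j => j < i), |A i j| * |d j|) :
    ∑ i, (d i)⁺ ≤ c ⬝ᵥ d := by
  have hswap : ∑ i, beta i * (d i)⁻ ≤ ∑ i, (c i - 1) * |d i| := by
    calc ∑ i, beta i * (d i)⁻
        ≤ ∑ i, beta i * ∑ j ∈ Finset.univ.filter (fun j => j < i), |A i j| * |d j| :=
          Finset.sum_le_sum fun i _ => mul_le_mul_of_nonneg_left (hd i) (beta_nonneg hc hbeta i)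
      _ = ∑ i, (c i - 1) * |d i| := by
          simp only [hc, add_sub_cancel_right, Finset.mul_sum, Finset.sum_mul,
            Finset.sum_filter]
          rw [Finset.sum_comm]
          refine Finset.sum_congr rfl fun i _ => Finset.sum_congr rfl fun j _ => ?_
          split_ifs <;> ring
  have hid : ∀ i, c i * d i = (d i)⁺ + ((c i - 1) * |d i| - beta i * (d i)⁻) := by
    intro i
    have hb : beta i = 2 * c i - 1 := by linarith [hc i, hbeta i]
    have h1 := posPart_sub_negPart (d i)
    have h2 := posPart_add_negPart (d i)
    rw [hb, ← h2]
    nth_rw 1 [← h1]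
    ring
  rw [dotProduct, Finset.sum_congr rfl fun i _ => hid i, Finset.sum_add_distrib,
    Finset.sum_sub_distrib]
  linarith

/-- Equality case of `sum_posPart_le_cost`: a displacement of non-positive cost vanishes, since its
positive part does and the bound `hd` then kills the coordinates one after the other. -/
lemma displacement_eq_zero {m : ℕ} {A : Matrix (Fin m) (Fin m) ℝ} {d : Fin m → ℝ}
    (hd : ∀ i, (d i)⁻ ≤ ∑ j ∈ Finset.univ.filter (fun j => j < i), |A i j| * |d j|)
    (hp : ∑ i, (d i)⁺ ≤ 0) (i : Fin m) : d i = 0 := by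
  have hp0 : ∀ i, (d i)⁺ = 0 := fun i =>
    (Finset.sum_eq_zero_iff_of_nonneg fun j _ => posPart_nonneg (d j)).1
      (le_antisymm hp (Finset.sum_nonneg fun j _ => posPart_nonneg (d j))) i (Finset.mem_univ i)
  induction i using WellFoundedLT.induction with
  | ind i ih =>
    have hz : ∑ j ∈ Finset.univ.filter (fun j => j < i), |A i j| * |d j| = 0 :=
      Finset.sum_eq_zero fun j hj => by rw [ih j (Finset.mem_filter.1 hj).2]; simp
    have hn : (d i)⁻ = 0 := le_antisymm ((hd i).trans hz.le) (negPart_nonneg _)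
    rw [← posPart_sub_negPart (d i), hp0 i, hn, sub_zero]

/-- For `A` lower-triangular with unit diagonal and any `q`,
there is exactly one `x ≥ 0` with `Ax ≥ q` and `x_i((Ax)_i − q_i) = 0` for all
`i`; it is given by the recursion `x_i = max(0, q_i − Σ_{j<i} A_{ij} x_j)`.
Consequently, the LP `min{cᵀx : Ax ≥ q, x ≥ 0}` with `c = ConstructCost(A)`
has a unique optimal solution. -/
theorem lcp_unique_solution_and_lp_unique_optimum
    (m : ℕ) (hm : 1 ≤ m) (A : Matrix (Fin m) (Fin m) ℝ)
    (hlow : ∀ i j : Fin m, i < j → A i j = 0)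
    (hdiag : ∀ i, A i i = 1)
    (beta c : Fin m → ℝ)
    (hc : ∀ i, c i = (∑ j ∈ Finset.univ.filter (fun j => i < j), |A j i| * beta j) + 1)
    (hbeta : ∀ i, beta i = c i + ∑ j ∈ Finset.univ.filter (fun j => i < j), |A j i| * beta j)
    (q : Fin m → ℝ) :
    (∃! x : Fin m → ℝ, (∀ i, 0 ≤ x i) ∧ (∀ i, q i ≤ A.mulVec x i) ∧
        (∀ i, x i * (A.mulVec x i - q i) = 0)) ∧
    (∀ x : Fin m → ℝ,
      ((∀ i, 0 ≤ x i) ∧ (∀ i, q i ≤ A.mulVec x i) ∧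
        (∀ i, x i * (A.mulVec x i - q i) = 0)) →
      ∀ i, x i = max 0 (q i - ∑ j ∈ Finset.univ.filter (fun j => j < i), A i j * x j)) ∧
    (∃! x : Fin m → ℝ,
      ((∀ i, q i ≤ A.mulVec x i) ∧ (∀ i, 0 ≤ x i)) ∧
      (∀ x' : Fin m → ℝ, ((∀ i, q i ≤ A.mulVec x' i) ∧ (∀ i, 0 ≤ x' i)) →
        c ⬝ᵥ x ≤ c ⬝ᵥ x')) := by
  obtain ⟨x, hx⟩ := exists_recursion A q
  have hL := (lcp_iff_recursion hlow hdiag q x).2 hx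
  have key : ∀ y : Fin m → ℝ, ((∀ i, q i ≤ A.mulVec y i) ∧ (∀ i, 0 ≤ y i)) →
      ∑ i, (y i - x i)⁺ ≤ c ⬝ᵥ y - c ⬝ᵥ x := fun y hy => by
    rw [← dotProduct_sub]
    exact sum_posPart_le_cost (d := y - x) hc hbeta
      (negPart_displacement_le hlow hdiag hL.2.2 hy.1 hy.2)
  refine ⟨⟨x, hL, fun y hy => recursion_unique ((lcp_iff_recursion hlow hdiag q y).1 hy) hx⟩,
    fun y hy => (lcp_iff_recursion hlow hdiag q y).1 hy,
    x, ⟨⟨hL.2.1, hL.1⟩, fun y hy => ?_⟩, ?_⟩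
  · have : 0 ≤ ∑ i, (y i - x i)⁺ := Finset.sum_nonneg fun i _ => posPart_nonneg _
    linarith [key y hy]
  · rintro y ⟨hy, hopt⟩
    have hle := hopt x ⟨hL.2.1, hL.1⟩
    funext i
    exact sub_eq_zero.1 (displacement_eq_zero (d := fun i => y i - x i)
      (negPart_displacement_le hlow hdiag hL.2.2 hy.1 hy.2) (by linarith [key y hy]) i)
end

section
/- Let m ≥ 1, T ⊆ {1,…,m}, and let H, H' be m×m real matrices such that: (i) the j-th column of H' equals the j-th column of H for every j ∉ T; (ii) for every t ∈ T, the t-th column of H is the t-th standard basis vector e_t; (iii) for every t ∈ T there exist an index p_t ≠ t and a real α_t ≥ 0 such that the t-th row of H' equals α_t·e_{p_t}ᵀ + e_tᵀ, i.e., (H'x)_t = α_t·x_{p_t} + x_t for all x. Let M be the 2m×2m block matrix M = [[0, Hᵀ],[−H', 0]]. Then for every q ∈ ℝ^{2m} with all entries strictly positive, the only z ∈ ℝ^{2m} satisfying z ≥ 0, Mz ≤ q, and z_d·((Mz)_d − q_d) = 0 for all d is z = 0. -/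
/-!
Write `z = (x, y)` and `q = (a, b)`. For `t ∈ T` the row condition gives `(H'x)_t ≥ 0`, so the
constraint `-(H'x)_t ≤ b_t` is slack and `y_t = 0`; the column condition then gives
`(Hᵀy)_t = y_t = 0 < a_t`, so `x_t = 0`. Hence `x` vanishes on `T`, where alone `H` and `H'` may
differ in their columns, and `H'x = Hx`. Summing the complementarity conditions,
`∑ a_i x_i = ⟨x, Hᵀy⟩ = ⟨y, Hx⟩ = -∑ b_i y_i`. Both sums are nonnegative, so they vanish, and
positivity of `a` and `b` forces `x = y = 0`.
-/

open Matrix BigOperators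

/-- semi-monotonicity of the LCP matrix
`M = [[0, Hᵀ],[−H', 0]]`.  Under the structural hypotheses (i)–(iii) relating
`H` and `H'` on a set `T` of indices, for every strictly positive `q` the only
`z ≥ 0` with `Mz ≤ q` and `z_d((Mz)_d − q_d) = 0` for all `d` is `z = 0`. -/
theorem lcp_matrix_semi_monotone
    (m : ℕ) (hm : 1 ≤ m) (T : Finset (Fin m))
    (H H' : Matrix (Fin m) (Fin m) ℝ)
    (hcol : ∀ j ∉ T, ∀ i, H' i j = H i j)
    (hHcol : ∀ t ∈ T, ∀ i, H i t = if i = t then 1 else 0)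
    (hrow : ∀ t ∈ T, ∃ p : Fin m, p ≠ t ∧ ∃ α : ℝ, 0 ≤ α ∧
        ∀ j, H' t j = α * (if j = p then 1 else 0) + (if j = t then 1 else 0))
    (M : Matrix (Fin m ⊕ Fin m) (Fin m ⊕ Fin m) ℝ)
    (hM : M = Matrix.fromBlocks 0 H.transpose (-H') 0)
    (q : Fin m ⊕ Fin m → ℝ) (hq : ∀ d, 0 < q d)
    (z : Fin m ⊕ Fin m → ℝ)
    (hz : ∀ d, 0 ≤ z d)
    (hMz : ∀ d, M.mulVec z d ≤ q d)
    (hcomp : ∀ d, z d * (M.mulVec z d - q d) = 0) :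
    z = 0 := by
  subst hM
  have hL : ∀ i, (Matrix.fromBlocks 0 H.transpose (-H') 0).mulVec z (Sum.inl i)
      = ∑ j, H j i * z (Sum.inr j) := by
    intro i
    simp [Matrix.mulVec, dotProduct]
  have hR : ∀ i, (Matrix.fromBlocks 0 H.transpose (-H') 0).mulVec z (Sum.inr i)
      = -∑ j, H' i j * z (Sum.inl j) := by
    intro i
    simp [Matrix.mulVec, dotProduct]
  have cL : ∀ i, z (Sum.inl i) * ((∑ j, H j i * z (Sum.inr j)) - q (Sum.inl i)) = 0 :=
    fun i => hL i ▸ hcomp (Sum.inl i)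
  have cR : ∀ i, z (Sum.inr i) * (-(∑ j, H' i j * z (Sum.inl j)) - q (Sum.inr i)) = 0 :=
    fun i => hR i ▸ hcomp (Sum.inr i)
  have hyT : ∀ t ∈ T, z (Sum.inr t) = 0 := by
    intro t ht
    obtain ⟨p, -, α, hα, hr⟩ := hrow t ht
    have hnn : 0 ≤ ∑ j, H' t j * z (Sum.inl j) := by
      refine Finset.sum_nonneg fun j _ => mul_nonneg ?_ (hz _)
      rw [hr j]
      positivity
    rcases mul_eq_zero.mp (cR t) with h | h
    · exact h
    · linarith [hq (Sum.inr t)]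
  have hxT : ∀ t ∈ T, z (Sum.inl t) = 0 := by
    intro t ht
    have hsum : ∑ j, H j t * z (Sum.inr j) = 0 := by
      simp [hHcol t ht, hyT t ht]
    rcases mul_eq_zero.mp (cL t) with h | h
    · exact h
    · linarith [hq (Sum.inl t)]
  have hHx : ∀ i, ∑ j, H' i j * z (Sum.inl j) = ∑ j, H i j * z (Sum.inl j) := by
    intro i
    refine Finset.sum_congr rfl fun j _ => ?_
    by_cases hj : j ∈ T
    · simp [hxT j hj]
    · rw [hcol j hj]
  have hx : ∑ i, z (Sum.inl i) * q (Sum.inl i)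
      = ∑ i, z (Sum.inl i) * ∑ j, H j i * z (Sum.inr j) :=
    Finset.sum_congr rfl fun i _ => by linarith [cL i]
  have hy : ∑ i, z (Sum.inr i) * q (Sum.inr i)
      = -∑ i, z (Sum.inr i) * ∑ j, H i j * z (Sum.inl j) := by
    rw [← Finset.sum_neg_distrib]
    refine Finset.sum_congr rfl fun i _ => ?_
    rw [← hHx i]
    linarith [cR i]
  have hswap : ∑ i, z (Sum.inl i) * ∑ j, H j i * z (Sum.inr j)
      = ∑ i, z (Sum.inr i) * ∑ j, H i j * z (Sum.inl j) := by
    simp only [Finset.mul_sum]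
    rw [Finset.sum_comm]
    exact Finset.sum_congr rfl fun i _ => Finset.sum_congr rfl fun j _ => by ring
  have htot : ∑ d, z d * q d = 0 := by
    rw [Fintype.sum_sum_type]
    linarith
  have hzero := (Finset.sum_eq_zero_iff_of_nonneg
    fun d _ => mul_nonneg (hz d) (hq d).le).mp htot
  funext d
  exact (mul_eq_zero.mp (hzero d (Finset.mem_univ d))).resolve_right (hq d).ne'
end

section
/- Let H, H' be m×m real matrices and b ∈ ℝ^m, and let Ã, B̃ be the associated (m+1)×(m+1) payoff matrices. If ((x̃,s),(ỹ,t)) is a Nash equilibrium of the bimatrix game (Ã,B̃) with s > 0 and t > 0, then x = x̃/s and y = ỹ/t satisfy the associated LCP: x ≥ 0, y ≥ 0, H'x ≥ b, Hᵀy ≤ 1 (the all-ones vector), and, for all i ∈ {1,…,m}, y_i·((H'x)_i − b_i) = 0 and x_i·((Hᵀy)_i − 1) = 0. -/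
/-!
In an equilibrium every pure strategy in the support of a player's mixed strategy attains that
player's maximal pure payoff (`best_response_complementarity`). Since `s, t > 0`, the last pure
strategy is in both supports, so it serves as the reference: it pays `t` to the row player and `s`
to the column player. The other pure payoffs are `(Hᵀỹ)ᵢ` and `s (bⱼ + 1) - (H'x̃)ⱼ`. Comparing
them with `t` and `s` and dividing by these positive numbers gives the LCP.
-/

open Matrix BigOperators

/-- The `(m+1)×(m+1)` payoff matrix `Ã`: top-left `m×m` block `Hᵀ`, entry `1`
in position `(m+1,m+1)`, zeros elsewhere. -/
def Atilde {m : ℕ} (H : Matrix (Fin m) (Fin m) ℝ) :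
    Matrix (Fin m ⊕ Unit) (Fin m ⊕ Unit) ℝ :=
  Matrix.fromBlocks H.transpose 0 0 1

/-- The `(m+1)×(m+1)` payoff matrix `B̃`: top-left `m×m` block `−H'ᵀ`, last row
`(b₁+1,…,b_m+1, 1)`, zeros elsewhere. -/
def Btilde {m : ℕ} (H' : Matrix (Fin m) (Fin m) ℝ) (b : Fin m → ℝ) :
    Matrix (Fin m ⊕ Unit) (Fin m ⊕ Unit) ℝ :=
  Matrix.fromBlocks (-H'.transpose) 0 (Matrix.of fun _ j => b j + 1) 1

/-- A mixed strategy over `m+1` pure strategies. -/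
def IsMixed {m : ℕ} (z : Fin m ⊕ Unit → ℝ) : Prop :=
  (∀ d, 0 ≤ z d) ∧ ∑ d, z d = 1

/-- `(z₁, z₂)` is a Nash equilibrium of the bimatrix game `(Ã, B̃)`. -/
def IsNash {m : ℕ} (Ab Bb : Matrix (Fin m ⊕ Unit) (Fin m ⊕ Unit) ℝ)
    (z₁ z₂ : Fin m ⊕ Unit → ℝ) : Prop :=
  IsMixed z₁ ∧ IsMixed z₂ ∧
  (∀ z₁', IsMixed z₁' → z₁' ⬝ᵥ Ab.mulVec z₂ ≤ z₁ ⬝ᵥ Ab.mulVec z₂) ∧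
  (∀ z₂', IsMixed z₂' → z₁ ⬝ᵥ Bb.mulVec z₂' ≤ z₁ ⬝ᵥ Bb.mulVec z₂)

/-- If the mixed strategy `z` is a best response to the pure payoffs `v` and `d₀` lies in its
support, then `d₀` is an optimal pure strategy, and so is every other strategy in the support. -/
theorem best_response_complementarity {m : ℕ} {z v : Fin m ⊕ Unit → ℝ} (hz : IsMixed z)
    (hbr : ∀ z', IsMixed z' → z' ⬝ᵥ v ≤ z ⬝ᵥ v) {d₀ : Fin m ⊕ Unit} (hd₀ : 0 < z d₀) :
    (∀ e, v e ≤ v d₀) ∧ ∀ e, z e * (v e - v d₀) = 0 := by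
  have hpure : ∀ e, v e ≤ z ⬝ᵥ v := fun e => by
    have hmix : IsMixed (Pi.single e (1 : ℝ) : Fin m ⊕ Unit → ℝ) :=
      ⟨fun d => by by_cases h : d = e <;> simp [h], by simp⟩
    simpa using hbr _ hmix
  -- The nonnegative gaps `z e * (z ⬝ᵥ v - v e)` sum to zero, so each of them vanishes.
  have hsum : ∑ e, z e * (z ⬝ᵥ v - v e) = 0 := by
    simp only [mul_sub, Finset.sum_sub_distrib, ← Finset.sum_mul, hz.2, one_mul]
    exact sub_self _
  have hgap : ∀ e, z e * (z ⬝ᵥ v - v e) = 0 := fun e =>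
    (Finset.sum_eq_zero_iff_of_nonneg
      (fun e _ => mul_nonneg (hz.1 e) (sub_nonneg.2 (hpure e)))).1 hsum e (Finset.mem_univ e)
  have hval : z ⬝ᵥ v = v d₀ :=
    sub_eq_zero.1 ((mul_eq_zero.1 (hgap d₀)).resolve_left hd₀.ne')
  rw [hval] at hpure hgap
  exact ⟨hpure, fun e => by linear_combination -hgap e⟩

theorem Atilde_mulVec_inl {m : ℕ} (H : Matrix (Fin m) (Fin m) ℝ) (z : Fin m ⊕ Unit → ℝ)
    (i : Fin m) :
    (Atilde H).mulVec z (Sum.inl i) = H.transpose.mulVec (fun j => z (Sum.inl j)) i := by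
  simp [Atilde, Matrix.mulVec, dotProduct]

theorem Atilde_mulVec_inr {m : ℕ} (H : Matrix (Fin m) (Fin m) ℝ) (z : Fin m ⊕ Unit → ℝ) :
    (Atilde H).mulVec z (Sum.inr ()) = z (Sum.inr ()) := by
  simp [Atilde, Matrix.mulVec, dotProduct]

theorem vecMul_Btilde_inl {m : ℕ} (H' : Matrix (Fin m) (Fin m) ℝ) (b : Fin m → ℝ)
    (z : Fin m ⊕ Unit → ℝ) (j : Fin m) :
    Matrix.vecMul z (Btilde H' b) (Sum.inl j) =
      z (Sum.inr ()) * (b j + 1) - H'.mulVec (fun i => z (Sum.inl i)) j := by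
  simp [Btilde, Matrix.vecMul, Matrix.mulVec, dotProduct, mul_comm]
  ring

theorem vecMul_Btilde_inr {m : ℕ} (H' : Matrix (Fin m) (Fin m) ℝ) (b : Fin m → ℝ)
    (z : Fin m ⊕ Unit → ℝ) :
    Matrix.vecMul z (Btilde H' b) (Sum.inr ()) = z (Sum.inr ()) := by
  simp [Btilde, Matrix.vecMul, dotProduct]

theorem mulVec_fun_div {m : ℕ} (M : Matrix (Fin m) (Fin m) ℝ) (w : Fin m → ℝ) (c : ℝ)
    (i : Fin m) : M.mulVec (fun j => w j / c) i = M.mulVec w i / c := by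
  simp only [Matrix.mulVec, dotProduct, Finset.sum_div, mul_div_assoc]

/-- If `((x̃,s),(ỹ,t))` is a Nash equilibrium of `(Ã,B̃)` with
`s > 0` and `t > 0`, then `x = x̃/s`, `y = ỹ/t` solve the associated LCP:
`x, y ≥ 0`, `H'x ≥ b`, `Hᵀy ≤ 1`, and `y_i((H'x)_i − b_i) = 0`,
`x_i((Hᵀy)_i − 1) = 0` for all `i`. -/
theorem nash_to_lcp_solution
    (m : ℕ) (hm : 1 ≤ m) (H H' : Matrix (Fin m) (Fin m) ℝ) (b : Fin m → ℝ)
    (z₁ z₂ : Fin m ⊕ Unit → ℝ)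
    (hNE : IsNash (Atilde H) (Btilde H' b) z₁ z₂)
    (hs : 0 < z₁ (Sum.inr ())) (ht : 0 < z₂ (Sum.inr ())) :
    let x : Fin m → ℝ := fun i => z₁ (Sum.inl i) / z₁ (Sum.inr ())
    let y : Fin m → ℝ := fun i => z₂ (Sum.inl i) / z₂ (Sum.inr ())
    (∀ i, 0 ≤ x i) ∧ (∀ i, 0 ≤ y i) ∧
    (∀ i, b i ≤ H'.mulVec x i) ∧
    (∀ i, H.transpose.mulVec y i ≤ 1) ∧
    (∀ i, y i * (H'.mulVec x i - b i) = 0) ∧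
    (∀ i, x i * (H.transpose.mulVec y i - 1) = 0) := by
  obtain ⟨h₁, h₂, hA, hB⟩ := hNE
  obtain ⟨hAle, hAcomp⟩ := best_response_complementarity h₁ hA hs
  obtain ⟨hBle, hBcomp⟩ := best_response_complementarity (v := Matrix.vecMul z₁ (Btilde H' b)) h₂
    (fun z' hz' => by
      simpa only [dotProduct_mulVec, dotProduct_comm] using hB z' hz') ht
  intro x y
  refine ⟨fun i => div_nonneg (h₁.1 _) hs.le, fun i => div_nonneg (h₂.1 _) ht.le,
    fun i => ?_, fun i => ?_, fun i => ?_, fun i => ?_⟩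
  · have h := hBle (Sum.inl i)
    rw [vecMul_Btilde_inl, vecMul_Btilde_inr] at h
    rw [mulVec_fun_div, le_div_iff₀ hs]
    linarith
  · have h := hAle (Sum.inl i)
    rw [Atilde_mulVec_inl, Atilde_mulVec_inr] at h
    rw [mulVec_fun_div, div_le_one ht]
    exact h
  · have h := hBcomp (Sum.inl i)
    rw [vecMul_Btilde_inl, vecMul_Btilde_inr] at h
    rw [mulVec_fun_div]
    simp only [y]
    field_simp
    linear_combination -h
  · have h := hAcomp (Sum.inl i)
    rw [Atilde_mulVec_inl, Atilde_mulVec_inr] at h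
    rw [mulVec_fun_div]
    simp only [x]
    field_simp
    linear_combination h
end

section
/- Let H, H' be m×m real matrices and b ∈ ℝ^m, and let Ã, B̃ be the associated (m+1)×(m+1) payoff matrices. If (x,y) ∈ ℝ^m × ℝ^m is a solution of the associated LCP, then the pair of mixed strategies ( (x,1)/(1+Σ_i x_i) , (y,1)/(1+Σ_i y_i) ) is a Nash equilibrium of the bimatrix game (Ã,B̃). -/
/-!
Against the normalised `(y, 1)`, the pure strategies of the first player earn `(Hᵀy)ᵢ / (1 + ∑ y)`
and, for the last one, `1 / (1 + ∑ y)`. Feasibility of the LCP says that none of these exceeds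
`1 / (1 + ∑ y)`, and complementarity says that every strategy in the support of `(x, 1)` attains
this value. Similarly, against the normalised `(x, 1)`, the pure strategies of the second player
earn `(bⱼ + 1 - (H'x)ⱼ) / (1 + ∑ x)` and `1 / (1 + ∑ x)`. So both strategies are supported on pure
best responses, and `best_response` concludes.
-/

open Matrix BigOperators

/-- A mixed strategy supported on pure strategies that attain an upper bound `c` of the payoff
vector `u` is a best response. -/
lemma best_response {m : ℕ} {z u : Fin m ⊕ Unit → ℝ} {c : ℝ} (hz : IsMixed z)
    (hu : ∀ d, u d ≤ c) (hs : ∀ d, z d * (u d - c) = 0)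
    (z' : Fin m ⊕ Unit → ℝ) (hz' : IsMixed z') : z' ⬝ᵥ u ≤ z ⬝ᵥ u := by
  have h₁ : z ⬝ᵥ u = c := by
    calc z ⬝ᵥ u = ∑ d, z d * c :=
          Finset.sum_congr rfl fun d _ => by linarith [hs d, mul_sub (z d) (u d) c]
      _ = c := by rw [← Finset.sum_mul, hz.2, one_mul]
  calc z' ⬝ᵥ u ≤ ∑ d, z' d * c :=
        Finset.sum_le_sum fun d _ => mul_le_mul_of_nonneg_left (hu d) (hz'.1 d)
    _ = c := by rw [← Finset.sum_mul, hz'.2, one_mul]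
    _ = z ⬝ᵥ u := h₁.symm

lemma one_add_sum_pos {m : ℕ} {x : Fin m → ℝ} (hx : ∀ i, 0 ≤ x i) : 0 < 1 + ∑ i, x i := by
  linarith [Finset.sum_nonneg fun i (_ : i ∈ Finset.univ) => hx i]

lemma isMixed_normalized {m : ℕ} {x : Fin m → ℝ} (hx : ∀ i, 0 ≤ x i) :
    IsMixed (fun d : Fin m ⊕ Unit => Sum.elim x (fun _ => 1) d / (1 + ∑ i, x i)) := by
  have h := one_add_sum_pos hx
  constructor
  · rintro (i | _)
    · exact div_nonneg (hx i) h.le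
    · exact div_nonneg zero_le_one h.le
  · rw [← Finset.sum_div, Fintype.sum_sum_type]
    simp only [Sum.elim_inl, Sum.elim_inr, Finset.univ_unique, Finset.sum_singleton]
    rw [add_comm, div_self h.ne']

lemma normalized_eq_smul {m : ℕ} (x : Fin m → ℝ) (s : ℝ) :
    (fun d : Fin m ⊕ Unit => Sum.elim x (fun _ => 1) d / s)
      = s⁻¹ • Sum.elim x (fun _ => 1) := by
  ext d
  simp [div_eq_inv_mul]

/-- If `(x,y)` solves the LCP associated with `H, H', b`, then
`((x,1)/(1+Σᵢxᵢ), (y,1)/(1+Σᵢyᵢ))` is a Nash equilibrium of `(Ã,B̃)`. -/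
theorem lcp_solution_to_nash
    (m : ℕ) (hm : 1 ≤ m) (H H' : Matrix (Fin m) (Fin m) ℝ) (b : Fin m → ℝ)
    (x y : Fin m → ℝ)
    (hx : ∀ i, 0 ≤ x i) (hy : ∀ i, 0 ≤ y i)
    (hH'x : ∀ i, b i ≤ H'.mulVec x i)
    (hHy : ∀ i, H.transpose.mulVec y i ≤ 1)
    (hcs₁ : ∀ i, y i * (H'.mulVec x i - b i) = 0)
    (hcs₂ : ∀ i, x i * (H.transpose.mulVec y i - 1) = 0) :
    IsNash (Atilde H) (Btilde H' b)
      (fun d => Sum.elim x (fun _ => 1) d / (1 + ∑ i, x i))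
      (fun d => Sum.elim y (fun _ => 1) d / (1 + ∑ i, y i)) := by
  have hX := inv_pos.2 (one_add_sum_pos hx)
  have hY := inv_pos.2 (one_add_sum_pos hy)
  have mx := isMixed_normalized hx
  have my := isMixed_normalized hy
  refine ⟨mx, my, ?_, ?_⟩
  · have hA : Atilde H *ᵥ (fun d => Sum.elim y (fun _ => 1) d / (1 + ∑ i, y i))
        = (1 + ∑ i, y i)⁻¹ • Sum.elim (H.transpose *ᵥ y) (fun _ => 1) := by
      rw [normalized_eq_smul, mulVec_smul, Atilde, fromBlocks_mulVec]
      congr 1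
      ext (i | i) <;> simp [Function.comp_def]
    rw [hA]
    refine best_response (c := (1 + ∑ i, y i)⁻¹) mx ?_ ?_
    · rintro (i | _)
      · simpa using mul_le_mul_of_nonneg_left (hHy i) hY.le
      · simp
    · rintro (i | _)
      · simp only [Pi.smul_apply, smul_eq_mul, Sum.elim_inl]
        linear_combination (1 + ∑ i, x i)⁻¹ * (1 + ∑ i, y i)⁻¹ * hcs₂ i
      · simp
  · have hB : (fun d => Sum.elim x (fun _ => 1) d / (1 + ∑ i, x i)) ᵥ* Btilde H' b
        = (1 + ∑ i, x i)⁻¹ • Sum.elim (fun j => b j + 1 - (H' *ᵥ x) j) (fun _ => 1) := by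
      rw [normalized_eq_smul, smul_vecMul, Btilde, vecMul_fromBlocks]
      congr 1
      ext (i | i)
      · simp [Function.comp_def, vecMul_neg, vecMul_transpose, vecMul, dotProduct]
        ring
      · simp [Function.comp_def]
    intro z' hz'
    rw [dotProduct_mulVec, dotProduct_mulVec, hB, dotProduct_comm _ z',
      dotProduct_comm (_ • _)]
    refine best_response (c := (1 + ∑ i, x i)⁻¹) my ?_ ?_ z' hz'
    · rintro (i | _)
      · simpa using mul_le_mul_of_nonneg_left
          (show b i + 1 - (H' *ᵥ x) i ≤ 1 by linarith [hH'x i]) hX.le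
      · simp
    · rintro (i | _)
      · simp only [Pi.smul_apply, smul_eq_mul, Sum.elim_inl]
        linear_combination -(1 + ∑ i, x i)⁻¹ * (1 + ∑ i, y i)⁻¹ * hcs₁ i
      · simp
end

section
/- Let A' be an m×m real matrix and b ∈ ℝ^m, and let S be the associated (m+1)×(m+1) matrix. If z = (x,t) ∈ ℝ^{m+1} is a symmetric Nash equilibrium of the symmetric game (S,Sᵀ) with t > 0, then x' = x/t is a solution of the associated LCP: x' ≥ 0, A'x' ≥ b, and x'_i·((A'x')_i − b_i) = 0 for all i ∈ {1,…,m}. -/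
/-!
Against an equilibrium `z`, every pure strategy earns at most the equilibrium payoff `v`, and every
pure strategy in the support of `z` earns exactly `v`: otherwise the `z`-average of the pure payoffs
would be below `v`. The last pure strategy earns `t` (the last row of `S` is `(0,…,0,1)`), so `t > 0`
forces `v = t`. Row `i` earns `-(A'x)ᵢ + (bᵢ + 1) t`, so optimality reads `(A'x)ᵢ ≥ bᵢ t`, with
equality if `xᵢ ≠ 0`; dividing by `t` gives the complementarity problem.
-/

open Matrix BigOperators

/-- The `(m+1)×(m+1)` matrix `S`: top-left `m×m` block `−A'`, last column
`(b₁+1,…,b_m+1, 1)ᵀ`, last row `(0,…,0,1)`. -/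
def Smat {m : ℕ} (A' : Matrix (Fin m) (Fin m) ℝ) (b : Fin m → ℝ) :
    Matrix (Fin m ⊕ Unit) (Fin m ⊕ Unit) ℝ :=
  Matrix.fromBlocks (-A') (Matrix.of fun i _ => b i + 1) 0 1

/-- `z` is a symmetric Nash equilibrium of the symmetric game `(S,Sᵀ)`:
`z` is a mixed strategy and `z'ᵀSz ≤ zᵀSz` for every mixed strategy `z'`. -/
def IsSymNash {m : ℕ} (S : Matrix (Fin m ⊕ Unit) (Fin m ⊕ Unit) ℝ)
    (z : Fin m ⊕ Unit → ℝ) : Prop :=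
  ((∀ d, 0 ≤ z d) ∧ ∑ d, z d = 1) ∧
  ∀ z' : Fin m ⊕ Unit → ℝ, ((∀ d, 0 ≤ z' d) ∧ ∑ d, z' d = 1) →
    z' ⬝ᵥ S.mulVec z ≤ z ⬝ᵥ S.mulVec z

theorem IsSymNash.pure_le {m : ℕ} {S : Matrix (Fin m ⊕ Unit) (Fin m ⊕ Unit) ℝ}
    {z : Fin m ⊕ Unit → ℝ} (hz : IsSymNash S z) (d : Fin m ⊕ Unit) :
    S.mulVec z d ≤ z ⬝ᵥ S.mulVec z := by
  have h := hz.2 (Pi.single d 1) ⟨fun e => ?_, by simp⟩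
  · simpa using h
  · by_cases h : e = d
    · subst h; simp
    · simp [h]

/-- The payoff deficits `v - (Sz)_d`, weighted by `z`, are nonnegative and sum to zero, so each
weighted deficit vanishes. -/
theorem IsSymNash.mul_sub_eq_zero {m : ℕ} {S : Matrix (Fin m ⊕ Unit) (Fin m ⊕ Unit) ℝ}
    {z : Fin m ⊕ Unit → ℝ} (hz : IsSymNash S z) (d : Fin m ⊕ Unit) :
    z d * (z ⬝ᵥ S.mulVec z - S.mulVec z d) = 0 := by
  have hsum : ∑ e, z e * (z ⬝ᵥ S.mulVec z - S.mulVec z e) = 0 := by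
    simp only [mul_sub, Finset.sum_sub_distrib, ← Finset.sum_mul, hz.1.2, one_mul]
    exact sub_self _
  exact (Finset.sum_eq_zero_iff_of_nonneg
    (fun e _ => mul_nonneg (hz.1.1 e) (sub_nonneg.2 (hz.pure_le e)))).1 hsum d (Finset.mem_univ d)

theorem Smat_mulVec_inr {m : ℕ} (A' : Matrix (Fin m) (Fin m) ℝ) (b : Fin m → ℝ)
    (z : Fin m ⊕ Unit → ℝ) : (Smat A' b).mulVec z (Sum.inr ()) = z (Sum.inr ()) := by
  simp [Smat, Matrix.mulVec, dotProduct]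

theorem Smat_mulVec_inl {m : ℕ} (A' : Matrix (Fin m) (Fin m) ℝ) (b : Fin m → ℝ)
    (z : Fin m ⊕ Unit → ℝ) (i : Fin m) : (Smat A' b).mulVec z (Sum.inl i) =
      -A'.mulVec (fun j => z (Sum.inl j)) i + (b i + 1) * z (Sum.inr ()) := by
  simp [Smat, Matrix.mulVec, dotProduct]

/-- If `z = (x,t)` is a symmetric Nash equilibrium of `(S,Sᵀ)`
with `t > 0`, then `x' = x/t` solves the associated LCP: `x' ≥ 0`,
`A'x' ≥ b`, and `x'_i((A'x')_i − b_i) = 0` for all `i`. -/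
theorem symNash_to_lcp
    (m : ℕ) (hm : 1 ≤ m) (A' : Matrix (Fin m) (Fin m) ℝ) (b : Fin m → ℝ)
    (z : Fin m ⊕ Unit → ℝ)
    (hz : IsSymNash (Smat A' b) z)
    (ht : 0 < z (Sum.inr ())) :
    let x' : Fin m → ℝ := fun i => z (Sum.inl i) / z (Sum.inr ())
    (∀ i, 0 ≤ x' i) ∧ (∀ i, b i ≤ A'.mulVec x' i) ∧
    (∀ i, x' i * (A'.mulVec x' i - b i) = 0) := by
  intro x'
  have hv : z ⬝ᵥ (Smat A' b).mulVec z = z (Sum.inr ()) := by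
    have h := hz.mul_sub_eq_zero (Sum.inr ())
    rw [Smat_mulVec_inr] at h
    exact sub_eq_zero.1 ((mul_eq_zero.1 h).resolve_left ht.ne')
  have hx : ∀ i, A'.mulVec x' i
      = A'.mulVec (fun j => z (Sum.inl j)) i / z (Sum.inr ()) := fun i => by
    simp only [x', Matrix.mulVec, dotProduct, Finset.sum_div, mul_div_assoc]
  refine ⟨fun i => div_nonneg (hz.1.1 _) ht.le, fun i => ?_, fun i => ?_⟩
  · have h := hz.pure_le (Sum.inl i)
    rw [hv, Smat_mulVec_inl] at h
    rw [hx, le_div_iff₀ ht]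
    linarith
  · have h := hz.mul_sub_eq_zero (Sum.inl i)
    rw [hv, Smat_mulVec_inl] at h
    rw [hx]
    simp only [x']
    field_simp
    linear_combination h
end

section
/- Let A' be an m×m real matrix and b ∈ ℝ^m, and let S be the associated (m+1)×(m+1) matrix. If x ∈ ℝ^m is a solution of the associated LCP (x ≥ 0, A'x ≥ b, and x_i·((A'x)_i − b_i) = 0 for all i), then z = (x,1)/(1 + Σ_i x_i) is a symmetric Nash equilibrium of the symmetric game (S,Sᵀ). -/
/-! Write `c = 1 / (1 + Σ xᵢ)` and `z = c • (x, 1)`. The last entry of `S z` is `c`, and its `i`-th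
entry is `c * (1 - ((A' x)ᵢ - bᵢ)) ≤ c` by feasibility. Hence every mixed strategy earns at most `c`
against `z`, while complementary slackness says that the entries in the support of `z` equal `c`, so
`z` itself earns exactly `c`. -/

open Matrix BigOperators

/-- A mixed strategy whose support consists of pure strategies earning the maximal payoff `c` against
itself is a symmetric Nash equilibrium. -/
lemma isSymNash_of_support {m : ℕ} (S : Matrix (Fin m ⊕ Unit) (Fin m ⊕ Unit) ℝ)
    (z : Fin m ⊕ Unit → ℝ) (c : ℝ) (hz : ∀ d, 0 ≤ z d) (hsum : ∑ d, z d = 1)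
    (hle : ∀ d, S.mulVec z d ≤ c) (heq : ∀ d, z d * S.mulVec z d = z d * c) :
    IsSymNash S z := by
  refine ⟨⟨hz, hsum⟩, fun z' ⟨hz', hsum'⟩ => ?_⟩
  calc z' ⬝ᵥ S.mulVec z ≤ ∑ d, z' d * c :=
        Finset.sum_le_sum fun d _ => mul_le_mul_of_nonneg_left (hle d) (hz' d)
    _ = ∑ d, z d * c := by rw [← Finset.sum_mul, ← Finset.sum_mul, hsum, hsum']
    _ = z ⬝ᵥ S.mulVec z := Finset.sum_congr rfl fun d _ => (heq d).symm

/-- If `x` solves the LCP (`x ≥ 0`, `A'x ≥ b`,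
`x_i((A'x)_i − b_i) = 0` for all `i`), then `(x,1)/(1+Σᵢxᵢ)` is a symmetric
Nash equilibrium of `(S,Sᵀ)`. -/
theorem lcp_to_symNash
    (m : ℕ) (hm : 1 ≤ m) (A' : Matrix (Fin m) (Fin m) ℝ) (b : Fin m → ℝ)
    (x : Fin m → ℝ)
    (hx : ∀ i, 0 ≤ x i)
    (hA'x : ∀ i, b i ≤ A'.mulVec x i)
    (hcs : ∀ i, x i * (A'.mulVec x i - b i) = 0) :
    IsSymNash (Smat A' b)
      (fun d => Sum.elim x (fun _ => 1) d / (1 + ∑ i, x i)) := by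
  have hpos : 0 < 1 + ∑ i, x i := by
    have := Finset.sum_nonneg fun i (_ : i ∈ Finset.univ) => hx i
    linarith
  set c : ℝ := (1 + ∑ i, x i)⁻¹ with hc
  have hc0 : 0 ≤ c := inv_nonneg.mpr hpos.le
  have hz : (fun d => Sum.elim x (fun _ => 1) d / (1 + ∑ i, x i)) =
      c • (Sum.elim x (fun _ => 1) : Fin m ⊕ Unit → ℝ) := by
    funext d
    simp [hc, div_eq_inv_mul]
  rw [hz]
  have hinl : ∀ i, (Smat A' b).mulVec (c • (Sum.elim x (fun _ => 1) : Fin m ⊕ Unit → ℝ))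
      (Sum.inl i) = c * (1 - (A'.mulVec x i - b i)) := by
    intro i
    rw [Matrix.mulVec_smul, Smat, Matrix.fromBlocks_mulVec]
    simp [Matrix.neg_mulVec, Matrix.mulVec, dotProduct]
    left
    ring
  have hinr : ∀ u, (Smat A' b).mulVec (c • (Sum.elim x (fun _ => 1) : Fin m ⊕ Unit → ℝ))
      (Sum.inr u) = c := by
    intro u
    rw [Matrix.mulVec_smul, Smat, Matrix.fromBlocks_mulVec]
    simp
  refine isSymNash_of_support _ _ c ?_ ?_ ?_ ?_
  · rintro (i | u)
    · simpa using mul_nonneg hc0 (hx i)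
    · simpa using hc0
  · simp only [Pi.smul_apply, smul_eq_mul, ← Finset.mul_sum, Fintype.sum_sum_type,
      Sum.elim_inl, Sum.elim_inr, Finset.univ_unique, Finset.sum_singleton]
    rw [add_comm, hc, inv_mul_cancel₀ hpos.ne']
  · rintro (i | u)
    · rw [hinl]
      nlinarith [mul_nonneg hc0 (sub_nonneg.mpr (hA'x i))]
    · rw [hinr]
  · rintro (i | u)
    · rw [hinl]
      simp only [Pi.smul_apply, smul_eq_mul, Sum.elim_inl]
      linear_combination (-c ^ 2) * hcs i
    · rw [hinr]
end

section
/- Let A be an m×m real lower-triangular matrix (A_{ij} = 0 for j > i) with all diagonal entries equal to 1, let T ⊆ {1,…,m}, let b ∈ ℝ^m, and let A' be an m×m real matrix such that: (i) the j-th column of A' equals the j-th column of A for every j ∉ T; (ii) every t ∈ T satisfies t ≥ 2 and the t-th row of A' equals e_{t−1}ᵀ + e_tᵀ, i.e., (A'x)_t = x_{t−1} + x_t for all x. Let S be the associated (m+1)×(m+1) matrix built from A' and b. Then every symmetric Nash equilibrium z = (x,t) of the symmetric game (S,Sᵀ) satisfies t > 0. -/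
/-!
Suppose the last entry is `0`. Then the last row of `S` earns `0` against `z`, while row `i` earns
`-(A' x)ᵢ`, so `(A' x)ᵢ ≤ 0` for each `i` in the support of `x`
(`IsSymNash.mulVec_nonpos`, by shifting the mass at `i` to the last strategy).
For `i ∈ T` this is impossible, since `(A' x)ᵢ = xᵢ₋₁ + xᵢ ≥ xᵢ > 0`; hence `x` vanishes on `T`,
and so `A' x = A x`. At the least index `i` of the support of `x`, triangularity then gives
`(A' x)ᵢ = xᵢ > 0`, again a contradiction. So `x = 0`, against `∑ z = 1`.
-/

open Matrix BigOperators

/-- No pure strategy in the support earns less than another pure strategy. -/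
lemma IsSymNash.mulVec_le {m : ℕ} {S : Matrix (Fin m ⊕ Unit) (Fin m ⊕ Unit) ℝ}
    {z : Fin m ⊕ Unit → ℝ} (hz : IsSymNash S z) {c : Fin m ⊕ Unit} (hc : 0 < z c)
    (d : Fin m ⊕ Unit) : S.mulVec z d ≤ S.mulVec z c := by
  obtain ⟨⟨hpos, hsum⟩, hbest⟩ := hz
  -- Deviate by moving all the mass at `c` to `d`.
  have h := hbest (z - Pi.single c (z c) + Pi.single d (z c)) ⟨fun k => ?_, ?_⟩
  · rw [add_dotProduct, sub_dotProduct, single_dotProduct, single_dotProduct] at h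
    exact le_of_mul_le_mul_left (by linarith) hc
  · have h1 : 0 ≤ (Pi.single d (z c) : Fin m ⊕ Unit → ℝ) k := by
      by_cases hk : k = d
      · subst hk; simpa using hc.le
      · simp [hk]
    have h2 : 0 ≤ z k - (Pi.single c (z c) : Fin m ⊕ Unit → ℝ) k := by
      by_cases hk : k = c
      · subst hk; simp
      · simpa [hk] using hpos k
    simpa using add_nonneg h2 h1
  · simp only [Pi.add_apply, Pi.sub_apply, Finset.sum_add_distrib, Finset.sum_sub_distrib,
      Finset.sum_pi_single', Finset.mem_univ, if_true, hsum]
    simp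

lemma IsSymNash.mulVec_nonpos {m : ℕ} {A' : Matrix (Fin m) (Fin m) ℝ} {b : Fin m → ℝ}
    {z : Fin m ⊕ Unit → ℝ} (hz : IsSymNash (Smat A' b) z) (ht : z (Sum.inr ()) = 0)
    {i : Fin m} (hi : 0 < z (Sum.inl i)) : ∑ j, A' i j * z (Sum.inl j) ≤ 0 := by
  have h := hz.mulVec_le hi (Sum.inr ())
  simpa [Smat, mulVec, dotProduct, ht] using h

/-- Let `A` be lower-triangular with unit diagonal, `T` a set of
indices each of which has a predecessor (`t ≥ 2` in one-based indexing), and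
`A'` agree with `A` on columns outside `T` while for `t ∈ T` the `t`-th row of
`A'` is `e_{t−1}ᵀ + e_tᵀ`.  Then every symmetric Nash equilibrium `z = (x,t)`
of the game `(S,Sᵀ)` built from `A'` and `b` has last entry `t > 0`. -/
theorem symNash_last_entry_positive
    (m : ℕ) (hm : 1 ≤ m) (T : Finset (Fin m))
    (A A' : Matrix (Fin m) (Fin m) ℝ) (b : Fin m → ℝ)
    (hlow : ∀ i j : Fin m, i < j → A i j = 0)
    (hdiag : ∀ i, A i i = 1)
    (hcol : ∀ j ∉ T, ∀ i, A' i j = A i j)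
    (hrowT : ∀ t ∈ T, 1 ≤ (t : ℕ) ∧
        ∀ j : Fin m, A' t j =
          (if (j : ℕ) + 1 = (t : ℕ) then 1 else 0) + (if j = t then 1 else 0))
    (z : Fin m ⊕ Unit → ℝ)
    (hz : IsSymNash (Smat A' b) z) :
    0 < z (Sum.inr ()) := by
  have hpos := hz.1.1
  refine lt_of_le_of_ne (hpos _) fun ht => ?_
  have key : ∀ i, 0 < z (Sum.inl i) → ∑ j, A' i j * z (Sum.inl j) ≤ 0 :=
    fun i hi => hz.mulVec_nonpos ht.symm hi
  have hT : ∀ t ∈ T, z (Sum.inl t) = 0 := by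
    intro t htT
    by_contra hne
    have hp : 0 < z (Sum.inl t) := lt_of_le_of_ne (hpos _) (Ne.symm hne)
    have hle := Finset.single_le_sum (s := Finset.univ)
      (f := fun j => A' t j * z (Sum.inl j))
      (fun j _ => mul_nonneg (by rw [(hrowT t htT).2 j]; positivity) (hpos _))
      (Finset.mem_univ t)
    have htt : A' t t = 1 := by simp [(hrowT t htT).2 t]
    simp only [htt, one_mul] at hle
    linarith [key t hp]
  have hx : ∀ i, z (Sum.inl i) = 0 := by
    -- Strong induction encodes the choice of the least index in the support.
    intro i
    induction i using WellFoundedLT.induction with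
    | ind i ih =>
      by_contra hne
      have hp : 0 < z (Sum.inl i) := lt_of_le_of_ne (hpos _) (Ne.symm hne)
      have hsum : ∑ j, A' i j * z (Sum.inl j) = A' i i * z (Sum.inl i) := by
        refine Finset.sum_eq_single i (fun j _ hj => ?_) (by simp)
        rcases lt_or_gt_of_ne hj with h | h
        · rw [ih j h, mul_zero]
        · by_cases hjT : j ∈ T
          · rw [hT j hjT, mul_zero]
          · rw [hcol j hjT, hlow i j h, zero_mul]
      have hiT : i ∉ T := fun h => hne (hT i h)
      have := key i hp
      rw [hsum, hcol i hiT, hdiag, one_mul] at this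
      linarith
  have hone := hz.1.2
  simp [hx, ← ht] at hone
end
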